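/- Let φ be subharmonic on ℂ with doubling Laplacian, ω a flat weight for φ, ε > 0 and m ∈ ℕ. There exists C > 0 such that for every η ∈ ℂ there is an entire function P_η with P_η(η) = 1 and |P_η(z)| ≤ C e^{ε(φ(z) − φ(η))} (ω(η)/ω(z)) / (1 + d_φ(z,η)^m) for all z ∈ ℂ. -/

import Mathlib

open MeasureTheory Metric Filter Set
open scoped ENNReal NNReal Real Topology Classical

noncomputable section

/-- The Laplacian of a function on `ℂ ≅ ℝ²`, computed via the second Fréchet derivative. -/
def lap (v : ℂ → ℝ) (z : ℂ) : ℝ :=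
  iteratedFDeriv ℝ 2 v z ![1, 1] + iteratedFDeriv ℝ 2 v z ![Complex.I, Complex.I]

/-- `μ` is a doubling measure on `ℂ` with doubling constant `C`. -/
def IsDoubling (μ : Measure ℂ) (C : ℝ≥0) : Prop :=
  ∀ z : ℂ, ∀ r : ℝ, 0 < r → μ (ball z (2 * r)) ≤ C * μ (ball z r)

/-- `φ` is a (continuous) subharmonic function whose distributional Laplacian is the
doubling measure `μ` (not identically zero).  The distributional identity is expressed
by testing against smooth compactly supported functions. -/
structure HasDoublingLaplacian (φ : ℂ → ℝ) (μ : Measure ℂ) : Prop where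
  continuous : Continuous φ
  lap_eq : ∀ v : ℂ → ℝ, ContDiff ℝ (⊤ : ℕ∞) v → HasCompactSupport v →
    ∫ z, φ z * lap v z = ∫ z, v z ∂μ
  doubling : ∃ C : ℝ≥0, 0 < C ∧ IsDoubling μ C
  ne_zero : μ ≠ 0

/-- `ρ` assigns to every `z` the positive radius such that the disk `D(z, ρ z)` has
`μ`-mass `1`. -/
def IsRadius (μ : Measure ℂ) (ρ : ℂ → ℝ) : Prop :=
  ∀ z : ℂ, 0 < ρ z ∧ μ (ball z (ρ z)) = 1

/-- The distance induced by the metric `ρ(z)⁻² dz⊗d\bar z`: infimum of lengths of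
`C¹` curves joining the two points. -/
def pathDist (ρ : ℂ → ℝ) (z ζ : ℂ) : ℝ :=
  sInf { L : ℝ | ∃ γ : ℝ → ℂ, γ 0 = z ∧ γ 1 = ζ ∧ ContDiff ℝ 1 γ ∧
    L = ∫ t in (0:ℝ)..1, ‖deriv γ t‖ / ρ (γ t) }

/-- The `pathDist` from a point to a set. -/
def pathDistSet (ρ : ℂ → ℝ) (z : ℂ) (Λ : Set ℂ) : ℝ :=
  ⨅ l : Λ, pathDist ρ z l.1

/-- A flat weight for `φ`: a positive measurable function whose logarithm has slow
growth with respect to the induced distance. -/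
def IsFlatWeight (ρ : ℂ → ℝ) (ω : ℂ → ℝ) : Prop :=
  (∀ z, 0 < ω z) ∧ Measurable ω ∧
  ∃ C : ℝ, 0 < C ∧ ∀ z ζ : ℂ,
    |Real.log (ω z) - Real.log (ω ζ)| ≤ C * (1 + max (Real.log (pathDist ρ z ζ)) 0)

/-- The norm of the space `F^p_{φ,ω}` (with `p = ∞` giving the weighted sup norm). -/
def Fnorm (p : ℝ≥0∞) (φ ω ρ : ℂ → ℝ) (f : ℂ → ℂ) : ℝ≥0∞ :=
  if p = ∞ then ⨆ z : ℂ, ENNReal.ofReal (ω z * ‖f z‖ * Real.exp (-φ z))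
  else (∫⁻ z, ENNReal.ofReal
      (‖f z‖ ^ p.toReal * Real.exp (-(p.toReal * φ z)) * ω z ^ p.toReal / ρ z ^ 2)) ^
      (1 / p.toReal)

/-- Membership in `F^p_{φ,ω}`: entire with finite norm. -/
def MemF (p : ℝ≥0∞) (φ ω ρ : ℂ → ℝ) (f : ℂ → ℂ) : Prop :=
  Differentiable ℂ f ∧ Fnorm p φ ω ρ f < ∞

/-- The norm of the sequence space `ℓ^p_{φ,ω}(Λ)`. -/
def lnorm (p : ℝ≥0∞) (φ ω : ℂ → ℝ) (Λ : Set ℂ) (v : ℂ → ℂ) : ℝ≥0∞ :=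
  if p = ∞ then ⨆ l : Λ, ENNReal.ofReal (ω l.1 * ‖v l.1‖ * Real.exp (-φ l.1))
  else (∑' l : Λ, ENNReal.ofReal
      (ω l.1 ^ p.toReal * ‖v l.1‖ ^ p.toReal * Real.exp (-(p.toReal * φ l.1)))) ^
      (1 / p.toReal)

/-- `Λ` is a sampling sequence for `F^p_{φ,ω}`. -/
def IsSampling (p : ℝ≥0∞) (φ ω ρ : ℂ → ℝ) (Λ : Set ℂ) : Prop :=
  if p = ∞ then
    ∃ C : ℝ≥0, 0 < C ∧ ∀ f : ℂ → ℂ, MemF ∞ φ ω ρ f →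
      Fnorm ∞ φ ω ρ f ≤ C * lnorm ∞ φ ω Λ f
  else
    ∃ C : ℝ≥0, 0 < C ∧ ∀ f : ℂ → ℂ, MemF p φ ω ρ f →
      (C : ℝ≥0∞)⁻¹ * lnorm p φ ω Λ f ≤ Fnorm p φ ω ρ f ∧
      Fnorm p φ ω ρ f ≤ C * lnorm p φ ω Λ f

/-- `Λ` is an interpolating sequence for `F^p_{φ,ω}`. -/
def IsInterpolating (p : ℝ≥0∞) (φ ω ρ : ℂ → ℝ) (Λ : Set ℂ) : Prop :=
  ∀ v : ℂ → ℂ, lnorm p φ ω Λ v < ∞ →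
    ∃ f : ℂ → ℂ, MemF p φ ω ρ f ∧ ∀ l ∈ Λ, f l = v l

/-- `Λ` is `ρ`-separated. -/
def RhoSeparated (ρ : ℂ → ℝ) (Λ : Set ℂ) : Prop :=
  ∃ δ : ℝ, 0 < δ ∧ ∀ l ∈ Λ, ∀ l' ∈ Λ, l ≠ l' → δ * max (ρ l) (ρ l') ≤ dist l l'

/-- `Λ` is a finite union of `ρ`-separated sequences. -/
def FiniteUnionSeparated (ρ : ℂ → ℝ) (Λ : Set ℂ) : Prop :=
  ∃ n : ℕ, ∃ Λs : Fin n → Set ℂ, Λ = ⋃ i, Λs i ∧ ∀ i, RhoSeparated ρ (Λs i)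

/-- Upper uniform density of `Λ` with respect to the doubling measure `μ`. -/
def upperUnifDensity (μ : Measure ℂ) (ρ : ℂ → ℝ) (Λ : Set ℂ) : ℝ≥0∞ :=
  limsup (fun r : ℝ =>
    ⨆ z : ℂ, Measure.count (Λ ∩ closedBall z (r * ρ z)) / μ (ball z (r * ρ z))) atTop

/-- Lower uniform density of `Λ` with respect to the doubling measure `μ`. -/
def lowerUnifDensity (μ : Measure ℂ) (ρ : ℂ → ℝ) (Λ : Set ℂ) : ℝ≥0∞ :=
  liminf (fun r : ℝ =>
    ⨅ z : ℂ, Measure.count (Λ ∩ closedBall z (r * ρ z)) / μ (ball z (r * ρ z))) atTop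

/-- The Cauchy–Riemann operator `∂̄` on `ℂ`-valued functions. -/
def dbar (v : ℂ → ℂ) (z : ℂ) : ℂ :=
  (fderiv ℝ v z 1 + Complex.I • fderiv ℝ v z Complex.I) / 2

/-- `∂̄ u = f` in the sense of distributions. -/
def IsDistribDbarOf (u f : ℂ → ℂ) : Prop :=
  ∀ v : ℂ → ℂ, ContDiff ℝ (⊤ : ℕ∞) v → HasCompactSupport v →
    ∫ z, f z * v z = - ∫ z, u z * dbar v z

/-- Closed axis-parallel rectangle with centre `a` and half-sides `s, t`. -/
def axisRect (a : ℂ) (s t : ℝ) : Set ℂ :=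
  {w : ℂ | |w.re - a.re| ≤ s ∧ |w.im - a.im| ≤ t}


/-- Local control of a measure by a Riesz-type potential with polynomial growth. -/
structure Ctrl (ν : Measure ℂ) (K δ γ : ℝ) : Prop where
  noatom : ∀ z, ν {z} = 0
  bound : ∀ z, ∫⁻ w in ball z 1, ENNReal.ofReal (‖z - w‖ ^ (-δ)) ∂ν
    ≤ ENNReal.ofReal (K * (1 + ‖z‖) ^ γ)

lemma doubling_iter {μ : Measure ℂ} {D : ℝ≥0} (h : IsDoubling μ D) (z : ℂ) {r : ℝ} (hr : 0 < r)
    (n : ℕ) : μ (ball z (2 ^ n * r)) ≤ (D : ℝ≥0∞) ^ n * μ (ball z r) := by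
  induction n with
  | zero => simp
  | succ k ih =>
    have := h z (2 ^ k * r) (by positivity)
    calc μ (ball z (2 ^ (k+1) * r)) = μ (ball z (2 * (2 ^ k * r))) := by congr 2; ring
      _ ≤ D * μ (ball z (2 ^ k * r)) := this
      _ ≤ D * ((D : ℝ≥0∞) ^ k * μ (ball z r)) := by gcongr
      _ = _ := by ring

lemma reverse_doubling {μ : Measure ℂ} {D : ℝ≥0} (h : IsDoubling μ D) (z : ℂ) {r : ℝ}
    (hr : 0 < r) :
    μ (ball z r) ≤ ((D ^ 3 / (D ^ 3 + 1) : ℝ≥0) : ℝ≥0∞) * μ (ball z (2 * r)) := by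
  set y : ℂ := z + ((3 * r / 2 : ℝ) : ℂ) with hy
  have hdist : dist y z = 3 * r / 2 := by
    rw [dist_eq_norm, hy, add_sub_cancel_left, Complex.norm_real, Real.norm_of_nonneg (by positivity)]
  have h1 : ball z r ⊆ ball y (2 ^ 3 * (r / 2)) := by
    apply ball_subset_ball'
    rw [dist_comm, hdist]; linarith
  have h2 : μ (ball z r) ≤ (D : ℝ≥0∞) ^ 3 * μ (ball y (r / 2)) :=
    (measure_mono h1).trans (doubling_iter h y (by positivity) 3)
  have h3 : Disjoint (ball z r) (ball y (r / 2)) := by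
    apply ball_disjoint_ball
    rw [dist_comm, hdist]; linarith
  have h4 : μ (ball z r) + μ (ball y (r / 2)) ≤ μ (ball z (2 * r)) := by
    rw [← measure_union h3 measurableSet_ball]
    apply measure_mono
    apply union_subset (ball_subset_ball (by linarith))
    apply ball_subset_ball'
    rw [hdist]; linarith
  have h5 : ((D ^ 3 + 1 : ℝ≥0) : ℝ≥0∞) * μ (ball z r) ≤ (D ^ 3 : ℝ≥0) * μ (ball z (2 * r)) := by
    push_cast
    calc ((D : ℝ≥0∞) ^ 3 + 1) * μ (ball z r) = D ^ 3 * μ (ball z r) + μ (ball z r) := by ring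
      _ ≤ D ^ 3 * μ (ball z r) + D ^ 3 * μ (ball y (r / 2)) := by gcongr
      _ = D ^ 3 * (μ (ball z r) + μ (ball y (r / 2))) := by ring
      _ ≤ _ := by gcongr
  have h6 : ((D ^ 3 + 1 : ℝ≥0) : ℝ≥0∞) ≠ 0 := by
    simp
  rw [ENNReal.coe_div (by positivity), ENNReal.div_eq_inv_mul, mul_assoc]
  calc μ (ball z r) = ((D ^ 3 + 1 : ℝ≥0) : ℝ≥0∞)⁻¹ * (((D ^ 3 + 1 : ℝ≥0) : ℝ≥0∞) * μ (ball z r)) := by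
        rw [← mul_assoc, ENNReal.inv_mul_cancel h6 ENNReal.coe_ne_top, one_mul]
    _ ≤ _ := by gcongr

lemma reverse_doubling_iter {μ : Measure ℂ} {D : ℝ≥0} (h : IsDoubling μ D) (z : ℂ) {r : ℝ}
    (hr : 0 < r) (n : ℕ) :
    μ (ball z r) ≤ ((D ^ 3 / (D ^ 3 + 1) : ℝ≥0) : ℝ≥0∞) ^ n * μ (ball z (2 ^ n * r)) := by
  induction n with
  | zero => simp
  | succ k ih =>
    have := reverse_doubling h z (r := 2 ^ k * r) (by positivity)
    refine ih.trans ?_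
    calc _ ≤ ((D ^ 3 / (D ^ 3 + 1) : ℝ≥0) : ℝ≥0∞) ^ k *
        (((D ^ 3 / (D ^ 3 + 1) : ℝ≥0) : ℝ≥0∞) * μ (ball z (2 * (2 ^ k * r)))) := by gcongr
      _ = _ := by rw [← mul_assoc, ← pow_succ]; congr 3; ring

lemma doubling_ball_bound {μ : Measure ℂ} {D : ℝ≥0} (hD : 1 ≤ D) (h : IsDoubling μ D)
    (h1 : μ (ball 0 1) = 1) (z : ℂ) :
    μ (ball z 1) ≤ ENNReal.ofReal (D * (1 + ‖z‖) ^ (Real.logb 2 D)) := by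
  obtain ⟨n, hn1, hn2⟩ := exists_nat_pow_near (x := 1 + ‖z‖) (y := (2:ℝ)) (by linarith [norm_nonneg z])
    (by norm_num)
  have hD' : (1:ℝ) ≤ D := by exact_mod_cast hD
  calc μ (ball z 1) ≤ μ (ball 0 (2 ^ (n+1) * 1)) := by
        apply measure_mono; apply ball_subset_ball'; rw [dist_zero_right]; linarith
    _ ≤ (D : ℝ≥0∞) ^ (n+1) * μ (ball 0 1) := doubling_iter h 0 one_pos _
    _ = ENNReal.ofReal ((D:ℝ) ^ (n+1)) := by
        rw [h1, mul_one, ENNReal.ofReal_pow (by positivity)]; simp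
    _ ≤ _ := by
        apply ENNReal.ofReal_le_ofReal
        rw [pow_succ, mul_comm]
        gcongr
        have : (D:ℝ) ^ n = ((2:ℝ) ^ n) ^ (Real.logb 2 D) := by
          rw [← Real.rpow_natCast, ← Real.rpow_natCast, ← Real.rpow_mul (by norm_num), mul_comm,
            Real.rpow_mul (by norm_num), Real.rpow_logb (by norm_num) (by norm_num) (by linarith)]
        rw [this]
        apply Real.rpow_le_rpow (by positivity) hn1
        exact Real.logb_nonneg (by norm_num) hD'

lemma doubling_ctrl (D : ℝ≥0) (hD : 1 ≤ D) : ∃ K δ γ : ℝ, 0 < K ∧ 0 < δ ∧ 0 ≤ γ ∧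
    ∀ μ : Measure ℂ, IsDoubling μ D → μ (ball 0 1) = 1 → Ctrl μ K δ γ := by
  have hD' : (1:ℝ) ≤ D := by exact_mod_cast hD
  set q : ℝ≥0 := D ^ 3 / (D ^ 3 + 1) with hq
  have hq0 : 0 < q := by have : 0 < D := by positivity
                         positivity
  have hq1 : q < 1 := by
    rw [hq, div_lt_one (by positivity)]
    exact lt_add_one _
  have hq1' : (q:ℝ) < 1 := by exact_mod_cast hq1
  have hq0' : (0:ℝ) < q := by exact_mod_cast hq0
  set δ : ℝ := - Real.logb 2 q / 2 with hδ
  have hδ0 : 0 < δ := by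
    have := Real.logb_neg (b := 2) (by norm_num) hq0' hq1'
    rw [hδ]; linarith
  set x : ℝ := (2:ℝ) ^ δ * q with hx
  have hx0 : 0 < x := by positivity
  have hx1 : x < 1 := by
    have : x = (2:ℝ) ^ (-δ) := by
      have : (q:ℝ) = (2:ℝ) ^ (-2 * δ) := by
        rw [hδ, show -2 * (- Real.logb 2 q / 2) = Real.logb 2 q by ring]
        rw [Real.rpow_logb (by norm_num) (by norm_num) hq0']
      rw [hx, this, ← Real.rpow_add (by norm_num)]
      ring_nf
    rw [this]
    exact Real.rpow_lt_one_of_one_lt_of_neg (by norm_num) (by linarith)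
  refine ⟨(2:ℝ) ^ δ * (1 - x)⁻¹ * D, δ, Real.logb 2 D, ?_, hδ0,
    Real.logb_nonneg (by norm_num) hD', ?_⟩
  · have : 0 < 1 - x := by linarith
    positivity
  intro μ hμ h1
  have hfin : ∀ z, μ (ball z 1) ≠ ∞ := fun z =>
    ((doubling_ball_bound hD hμ h1 z).trans_lt ENNReal.ofReal_lt_top).ne
  have hsmall : ∀ z, ∀ n : ℕ, μ (ball z ((2 ^ n)⁻¹)) ≤ (q : ℝ≥0∞) ^ n * μ (ball z 1) := by
    intro z n
    have := reverse_doubling_iter hμ z (r := (2 ^ n)⁻¹) (by positivity) n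
    rwa [mul_inv_cancel₀ (by positivity)] at this
  constructor
  · intro z
    have ht : Tendsto (fun n : ℕ => (q : ℝ≥0∞) ^ n * μ (ball z 1)) atTop (𝓝 (0 * μ (ball z 1))) := by
      apply ENNReal.Tendsto.mul_const
      · exact ENNReal.tendsto_pow_atTop_nhds_zero_of_lt_one (by exact_mod_cast hq1)
      · right; exact hfin z
    rw [zero_mul] at ht
    have : μ {z} ≤ 0 := by
      apply ge_of_tendsto' ht
      intro n
      refine le_trans (measure_mono ?_) (hsmall z n)
      simp
    simpa using this
  · intro z
    calc ∫⁻ w in ball z 1, ENNReal.ofReal (‖z - w‖ ^ (-δ)) ∂μ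
        ≤ ∫⁻ w, ∑' n : ℕ, (ball z ((2 ^ n : ℝ)⁻¹)).indicator
            (fun _ => ENNReal.ofReal (((2:ℝ) ^ δ) ^ (n+1))) w ∂μ := by
          rw [← lintegral_indicator measurableSet_ball]
          apply lintegral_mono
          intro w
          by_cases hw : w ∈ ball z 1
          · simp only [indicator_of_mem hw]
            rcases eq_or_ne w z with rfl | hne
            · simp [Real.zero_rpow (neg_ne_zero.mpr hδ0.ne')]
            · have hpos : 0 < ‖z - w‖ := norm_pos_iff.mpr (sub_ne_zero.mpr hne.symm)
              have hlt : ‖z - w‖ < 1 := by rwa [mem_ball, dist_comm, dist_eq_norm] at hw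
              have hex : ∃ n : ℕ, ((2:ℝ) ^ (n + 1))⁻¹ ≤ ‖z - w‖ := by
                obtain ⟨n, hn⟩ := pow_unbounded_of_one_lt (‖z - w‖⁻¹) (one_lt_two (α := ℝ))
                refine ⟨n, ?_⟩
                rw [inv_le_comm₀ (by positivity) hpos]
                exact hn.le.trans (pow_le_pow_right₀ (by norm_num) (by omega))
              set n := Nat.find hex with hn
              have hn1 : ((2:ℝ) ^ (n + 1))⁻¹ ≤ ‖z - w‖ := Nat.find_spec hex
              have hn2 : ‖z - w‖ < ((2:ℝ) ^ n)⁻¹ := by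
                rcases Nat.eq_zero_or_pos n with h0 | h0
                · rw [h0]; simpa using hlt
                · have := Nat.find_min hex (m := n - 1) (by omega)
                  rw [Nat.sub_add_cancel h0] at this
                  exact not_le.mp this
              refine le_trans ?_ (ENNReal.le_tsum n)
              rw [indicator_of_mem (by rwa [mem_ball, dist_comm, dist_eq_norm])]
              apply ENNReal.ofReal_le_ofReal
              calc ‖z - w‖ ^ (-δ) ≤ (((2:ℝ) ^ (n + 1))⁻¹) ^ (-δ) :=
                    Real.rpow_le_rpow_of_nonpos (by positivity) hn1 (by linarith)
                _ = _ := by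
                    rw [Real.inv_rpow (by positivity), Real.rpow_neg (by positivity), inv_inv,
                      ← Real.rpow_natCast, ← Real.rpow_natCast, ← Real.rpow_mul (by norm_num),
                      ← Real.rpow_mul (by norm_num), mul_comm]
          · simp [indicator_of_notMem hw]
      _ = ∑' n : ℕ, ENNReal.ofReal (((2:ℝ) ^ δ) ^ (n+1)) * μ (ball z ((2 ^ n : ℝ)⁻¹)) := by
          rw [lintegral_tsum (fun n => (measurable_const.indicator measurableSet_ball).aemeasurable)]
          congr 1; ext n
          rw [lintegral_indicator measurableSet_ball, setLIntegral_const]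
      _ ≤ ∑' n : ℕ, ENNReal.ofReal ((2:ℝ) ^ δ * x ^ n) * μ (ball z 1) := by
          apply ENNReal.tsum_le_tsum
          intro n
          calc _ ≤ ENNReal.ofReal (((2:ℝ) ^ δ) ^ (n+1)) * ((q : ℝ≥0∞) ^ n * μ (ball z 1)) := by
                gcongr; exact hsmall z n
            _ = _ := by
                rw [← mul_assoc]
                congr 1
                rw [show (q : ℝ≥0∞) = ENNReal.ofReal q by simp, ← ENNReal.ofReal_pow (by positivity),
                  ← ENNReal.ofReal_mul (by positivity)]
                congr 1
                rw [hx]; ring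
      _ = ENNReal.ofReal ((2:ℝ) ^ δ * (1 - x)⁻¹) * μ (ball z 1) := by
          rw [ENNReal.tsum_mul_right, ← ENNReal.ofReal_tsum_of_nonneg]
          · rw [tsum_mul_left, tsum_geometric_of_lt_one hx0.le hx1]
          · intro n; positivity
          · exact (summable_geometric_of_lt_one hx0.le hx1).mul_left _
      _ ≤ ENNReal.ofReal ((2:ℝ) ^ δ * (1 - x)⁻¹) *
            ENNReal.ofReal (D * (1 + ‖z‖) ^ (Real.logb 2 D)) := by
          gcongr; exact doubling_ball_bound hD hμ h1 z
      _ = _ := by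
          have : 0 < 1 - x := by linarith
          rw [← ENNReal.ofReal_mul (by positivity)]
          congr 1; ring

lemma doubling_large (D : ℝ≥0) (A : ℝ) : ∃ R : ℝ, 1 ≤ R ∧
    ∀ μ : Measure ℂ, IsDoubling μ D → μ (ball 0 1) = 1 → ENNReal.ofReal A ≤ μ (ball 0 R) := by
  set q : ℝ≥0 := D ^ 3 / (D ^ 3 + 1) with hq
  have hq1 : q < 1 := by
    rw [hq, div_lt_one (by positivity)]
    exact lt_add_one _
  have ht : Tendsto (fun n : ℕ => (q : ℝ≥0∞) ^ n * ENNReal.ofReal A) atTop (𝓝 (0 * ENNReal.ofReal A)) := by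
    apply ENNReal.Tendsto.mul_const
    · exact ENNReal.tendsto_pow_atTop_nhds_zero_of_lt_one (by exact_mod_cast hq1)
    · right; simp
  rw [zero_mul] at ht
  obtain ⟨n, hn⟩ := (ht.eventually (gt_mem_nhds zero_lt_one)).exists
  refine ⟨2 ^ n, one_le_pow₀ (by norm_num), ?_⟩
  intro μ hμ h1
  have := reverse_doubling_iter hμ 0 (r := 1) one_pos n
  rw [h1, mul_one] at this
  by_contra hlt
  push Not at hlt
  have h2 : (q : ℝ≥0∞) ^ n * μ (ball 0 (2 ^ n)) ≤ (q : ℝ≥0∞) ^ n * ENNReal.ofReal A := by gcongr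
  exact absurd (this.trans (h2)) (not_le.mpr hn)

lemma doubling_ball_finite {μ : Measure ℂ} {D : ℝ≥0} (h : IsDoubling μ D)
    (h1 : μ (ball 0 1) = 1) (R : ℝ) : μ (ball 0 R) ≠ ∞ := by
  obtain ⟨n, hn⟩ := pow_unbounded_of_one_lt R (one_lt_two (α := ℝ))
  have := doubling_iter h 0 one_pos n
  rw [h1, mul_one, mul_one] at this
  refine ((measure_mono (ball_subset_ball hn.le)).trans this).trans_lt ?_ |>.ne
  exact ENNReal.pow_lt_top ENNReal.coe_lt_top

lemma Ctrl.mono {ν ν' : Measure ℂ} {K δ γ : ℝ} (h : Ctrl ν K δ γ) (hle : ν' ≤ ν) :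
    Ctrl ν' K δ γ where
  noatom z := le_antisymm ((hle _).trans (h.noatom z).le) bot_le
  bound z := (lintegral_mono' (Measure.restrict_mono subset_rfl hle) le_rfl).trans (h.bound z)

lemma Ctrl.smul {ν : Measure ℂ} {K δ γ : ℝ} (h : Ctrl ν K δ γ) {c : ℝ} (hc : 0 ≤ c) :
    Ctrl (ENNReal.ofReal c • ν) (c * K) δ γ where
  noatom z := by simp [h.noatom z]
  bound z := by
    rw [Measure.restrict_smul, lintegral_smul_measure, mul_assoc, ENNReal.ofReal_mul hc, smul_eq_mul]
    gcongr
    exact h.bound z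

/-- logarithmic potential -/
def pot (ν : Measure ℂ) (z : ℂ) : ℝ := ∫ w, Real.log ‖z - w‖ ∂ν

lemma log_div_le {δ r x : ℝ} (hδ : 0 < δ) (hr : 0 < r) (hx : 0 ≤ x) :
    Real.log (r / x) ≤ r ^ δ / δ * x ^ (-δ) := by
  have := Real.log_le_rpow_div (x := r / x) (by positivity) hδ
  rw [Real.div_rpow hr.le hx] at this
  rw [Real.rpow_neg hx]
  calc _ ≤ _ := this
    _ = _ := by ring

lemma meas_logdiv (z : ℂ) (r : ℝ) : Measurable (fun w : ℂ => Real.log (r / ‖z - w‖)) := by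
  fun_prop

lemma Ctrl.log_lintegral {ν : Measure ℂ} {K δ γ : ℝ} (h : Ctrl ν K δ γ) (hδ : 0 < δ)
    (z : ℂ) {r : ℝ} (hr : 0 < r) (hr1 : r ≤ 1) :
    ∫⁻ w in ball z r, ENNReal.ofReal (Real.log (r / ‖z - w‖)) ∂ν
      ≤ ENNReal.ofReal (K * (1 + ‖z‖) ^ γ * r ^ δ / δ) := by
  calc ∫⁻ w in ball z r, ENNReal.ofReal (Real.log (r / ‖z - w‖)) ∂ν
      ≤ ∫⁻ w in ball z r, ENNReal.ofReal (r ^ δ / δ) * ENNReal.ofReal (‖z - w‖ ^ (-δ)) ∂ν := by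
        apply lintegral_mono
        intro w
        simp only
        rw [← ENNReal.ofReal_mul (by positivity)]
        exact ENNReal.ofReal_le_ofReal (log_div_le hδ hr (norm_nonneg _))
    _ = ENNReal.ofReal (r ^ δ / δ) * ∫⁻ w in ball z r, ENNReal.ofReal (‖z - w‖ ^ (-δ)) ∂ν := by
        rw [lintegral_const_mul]
        fun_prop
    _ ≤ ENNReal.ofReal (r ^ δ / δ) * ENNReal.ofReal (K * (1 + ‖z‖) ^ γ) := by
        gcongr
        exact (lintegral_mono_set (ball_subset_ball hr1)).trans (h.bound z)
    _ = _ := by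
        rw [← ENNReal.ofReal_mul (by positivity)]
        congr 1; ring

lemma log_div_nonneg_of_ball {z w : ℂ} {r : ℝ} (hw : w ∈ ball z r) :
    0 ≤ Real.log (r / ‖z - w‖) := by
  rw [mem_ball, dist_comm, dist_eq_norm] at hw
  rcases eq_or_lt_of_le (norm_nonneg (z - w)) with h0 | h0
  · rw [← h0]; simp
  · exact Real.log_nonneg (by rw [le_div_iff₀ h0]; linarith)

lemma Ctrl.log_integrableOn {ν : Measure ℂ} {K δ γ : ℝ} (h : Ctrl ν K δ γ) (hδ : 0 < δ)
    (z : ℂ) {r : ℝ} (hr : 0 < r) (hr1 : r ≤ 1) :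
    IntegrableOn (fun w => Real.log (r / ‖z - w‖)) (ball z r) ν := by
  refine ⟨(meas_logdiv z r).aestronglyMeasurable, ?_⟩
  rw [hasFiniteIntegral_iff_ofReal]
  · exact (h.log_lintegral hδ z hr hr1).trans_lt ENNReal.ofReal_lt_top
  · filter_upwards [ae_restrict_mem measurableSet_ball] with w hw using log_div_nonneg_of_ball hw

lemma Ctrl.log_integral {ν : Measure ℂ} {K δ γ : ℝ} (h : Ctrl ν K δ γ) (hK : 0 ≤ K) (hδ : 0 < δ)
    (z : ℂ) {r : ℝ} (hr : 0 < r) (hr1 : r ≤ 1) :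
    ∫ w in ball z r, Real.log (r / ‖z - w‖) ∂ν ≤ K * (1 + ‖z‖) ^ γ * r ^ δ / δ := by
  rw [integral_eq_lintegral_of_nonneg_ae]
  · apply ENNReal.toReal_le_of_le_ofReal (by positivity)
    exact h.log_lintegral hδ z hr hr1
  · filter_upwards [ae_restrict_mem measurableSet_ball] with w hw using log_div_nonneg_of_ball hw
  · exact (meas_logdiv z r).aestronglyMeasurable

lemma Ctrl.ae_ne {ν : Measure ℂ} {K δ γ : ℝ} (h : Ctrl ν K δ γ) (z : ℂ) : ∀ᵐ w ∂ν, w ≠ z := by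
  rw [ae_iff]; simpa using h.noatom z

lemma Ctrl.ball_le {ν : Measure ℂ} {K δ γ : ℝ} (h : Ctrl ν K δ γ) (hδ : 0 < δ)
    (z : ℂ) {r : ℝ} (hr : 0 < r) (hr1 : r ≤ 1) :
    ν (ball z r) ≤ ENNReal.ofReal (K * (1 + ‖z‖) ^ γ * r ^ δ) := by
  calc ν (ball z r) = ∫⁻ w in ball z r, 1 ∂ν := by simp
    _ ≤ ∫⁻ w in ball z r, ENNReal.ofReal (r ^ δ) * ENNReal.ofReal (‖z - w‖ ^ (-δ)) ∂ν := by
        apply lintegral_mono_ae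
        filter_upwards [ae_restrict_mem measurableSet_ball, ae_restrict_of_ae (h.ae_ne z)] with w hw hne
        rw [mem_ball, dist_comm, dist_eq_norm] at hw
        have h0 : 0 < ‖z - w‖ := norm_pos_iff.mpr (sub_ne_zero.mpr hne.symm)
        rw [← ENNReal.ofReal_mul (by positivity), ← ENNReal.ofReal_one]
        apply ENNReal.ofReal_le_ofReal
        rw [Real.rpow_neg h0.le, ← div_eq_mul_inv, ← Real.div_rpow hr.le h0.le]
        apply Real.one_le_rpow _ hδ.le
        rw [le_div_iff₀ h0]; linarith
    _ = ENNReal.ofReal (r ^ δ) * ∫⁻ w in ball z r, ENNReal.ofReal (‖z - w‖ ^ (-δ)) ∂ν := by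
        rw [lintegral_const_mul]
        fun_prop
    _ ≤ ENNReal.ofReal (r ^ δ) * ENNReal.ofReal (K * (1 + ‖z‖) ^ γ) := by
        gcongr
        exact (lintegral_mono_set (ball_subset_ball hr1)).trans (h.bound z)
    _ = _ := by
        rw [← ENNReal.ofReal_mul (by positivity)]
        congr 1; ring

/-- the standing assumptions on a measure -/
structure Good (ν : Measure ℂ) (K δ γ R : ℝ) : Prop where
  ctrl : Ctrl ν K δ γ
  fin : IsFiniteMeasure ν
  supp : ∀ᵐ w ∂ν, w ∈ ball (0:ℂ) R
  hK : 0 ≤ K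
  hδ : 0 < δ
  hγ : 0 ≤ γ
  hR : 1 ≤ R

lemma Good.log_integrable {ν : Measure ℂ} {K δ γ R : ℝ} (h : Good ν K δ γ R) (z : ℂ) :
    Integrable (fun w => Real.log ‖z - w‖) ν := by
  have := h.fin
  have hIntg : Integrable (fun w => (ball z 1).indicator (fun w => Real.log (1 / ‖z - w‖)) w
      + Real.log (1 + ‖z‖ + R)) ν := by
    apply Integrable.add
    · rw [integrable_indicator_iff measurableSet_ball]
      exact h.ctrl.log_integrableOn h.hδ z one_pos le_rfl
    · exact integrable_const _
  apply hIntg.mono'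
  · exact Measurable.aestronglyMeasurable (by fun_prop)
  · filter_upwards [h.supp] with w hw
    have hR := h.hR
    have hz := norm_nonneg z
    rw [mem_ball, dist_zero_right] at hw
    have hl : 0 ≤ Real.log (1 + ‖z‖ + R) := Real.log_nonneg (by linarith)
    by_cases hb : w ∈ ball z 1
    · have h1 := log_div_nonneg_of_ball hb
      rw [indicator_of_mem hb]
      rw [one_div, Real.log_inv] at h1 ⊢
      rw [Real.norm_eq_abs, abs_of_nonpos (by linarith)]
      linarith
    · rw [indicator_of_notMem hb, zero_add]
      rw [mem_ball, dist_comm, dist_eq_norm, not_lt] at hb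
      rw [Real.norm_eq_abs, abs_of_nonneg (Real.log_nonneg hb)]
      apply Real.log_le_log (by linarith)
      linarith [norm_sub_le z w]

lemma Good.cont_integrable {ν : Measure ℂ} {K δ γ R : ℝ} (h : Good ν K δ γ R) {k : ℂ → ℝ}
    (hk : Continuous k) (z : ℂ) : Integrable (fun w => k (z - w)) ν := by
  have := h.fin
  obtain ⟨C, hC⟩ := (isCompact_closedBall (0:ℂ) R).exists_bound_of_continuousOn
    (f := fun w => k (z - w)) (by fun_prop)
  refine Integrable.of_bound (by fun_prop) C ?_
  filter_upwards [h.supp] with w hw using hC w (ball_subset_closedBall hw)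

lemma Good.kernel_approx {ν : Measure ℂ} {K δ γ R : ℝ} (h : Good ν K δ γ R) {k : ℂ → ℝ}
    (hk : Continuous k) {t : ℝ} (ht : 0 < t) (ht1 : t ≤ 1)
    (hk1 : ∀ x, t ≤ ‖x‖ → k x = Real.log ‖x‖)
    (hk2 : ∀ x, x ≠ 0 → ‖x‖ < t → |k x - Real.log ‖x‖| ≤ Real.log (t / ‖x‖)) (z : ℂ) :
    |(∫ w, k (z - w) ∂ν) - pot ν z| ≤ K * (1 + ‖z‖) ^ γ * t ^ δ / δ := by
  have := h.fin
  rw [pot, ← integral_sub (h.cont_integrable hk z) (h.log_integrable z), ← Real.norm_eq_abs]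
  refine (norm_integral_le_of_norm_le (g := (ball z t).indicator (fun w => Real.log (t / ‖z - w‖)))
    ?_ ?_).trans ?_
  · rw [integrable_indicator_iff measurableSet_ball]
    exact h.ctrl.log_integrableOn h.hδ z ht ht1
  · filter_upwards [h.ctrl.ae_ne z] with w hw
    by_cases hb : w ∈ ball z t
    · rw [indicator_of_mem hb]
      rw [mem_ball, dist_comm, dist_eq_norm] at hb
      exact hk2 _ (sub_ne_zero.mpr hw.symm) hb
    · rw [indicator_of_notMem hb]
      rw [mem_ball, dist_comm, dist_eq_norm, not_lt] at hb
      rw [hk1 _ hb]; simp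
  · rw [integral_indicator measurableSet_ball]
    exact h.ctrl.log_integral h.hK h.hδ z ht ht1

lemma Good.restrict_eq {ν : Measure ℂ} {K δ γ R : ℝ} (h : Good ν K δ γ R) :
    ν.restrict (closedBall 0 R) = ν := by
  rw [Measure.restrict_eq_self_of_ae_mem]
  filter_upwards [h.supp] with w hw using ball_subset_closedBall hw

lemma Good.cont_kernel {ν : Measure ℂ} {K δ γ R : ℝ} (h : Good ν K δ γ R) {k : ℂ → ℝ}
    (hk : Continuous k) : Continuous (fun z => ∫ w, k (z - w) ∂ν) := by
  have := h.fin
  rw [← h.restrict_eq]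
  apply continuous_parametric_integral_of_continuous (f := fun z w => k (z - w)) (μ := ν) _
    (isCompact_closedBall _ _)
  simp only [Function.uncurry_def]
  fun_prop

lemma Good.pot_continuous {ν : Measure ℂ} {K δ γ R : ℝ} (h : Good ν K δ γ R) :
    Continuous (pot ν) := by
  have hK := h.hK
  have hδ := h.hδ
  rw [continuous_iff_continuousAt]
  intro z0
  have hloc : TendstoUniformlyOn (fun (t : ℝ) z => ∫ w, Real.log (max ‖z - w‖ t) ∂ν) (pot ν)
      (𝓝[>] 0) (ball z0 1) := by
    rw [Metric.tendstoUniformlyOn_iff]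
    intro e he
    have hlim : Tendsto (fun t : ℝ => K * (1 + (‖z0‖ + 1)) ^ γ * t ^ δ / δ) (𝓝[>] 0) (𝓝 0) := by
      have : Tendsto (fun t : ℝ => t ^ δ) (𝓝[>] 0) (𝓝 ((0:ℝ) ^ δ)) :=
        ((Real.continuousAt_rpow_const 0 δ (Or.inr h.hδ.le)).tendsto).mono_left nhdsWithin_le_nhds
      rw [Real.zero_rpow h.hδ.ne'] at this
      simpa using (this.const_mul (K * (1 + (‖z0‖ + 1)) ^ γ)).div_const δ
    filter_upwards [hlim.eventually (gt_mem_nhds he), self_mem_nhdsWithin,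
      nhdsWithin_le_nhds (Iio_mem_nhds (one_pos (α := ℝ)))] with t ht1 ht2 ht3 z hz
    rw [mem_Ioi] at ht2
    rw [dist_comm, Real.dist_eq]
    refine lt_of_le_of_lt (h.kernel_approx (k := fun x => Real.log (max ‖x‖ t)) ?_ ht2
      (le_of_lt ht3) ?_ ?_ z) (lt_of_le_of_lt ?_ ht1)
    · apply Continuous.log (by fun_prop)
      intro x
      exact (lt_of_lt_of_le ht2 (le_max_right _ _)).ne'
    · intro x hx; rw [max_eq_left hx]
    · intro x hx hx2
      have : 0 < ‖x‖ := norm_pos_iff.mpr hx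
      rw [max_eq_right hx2.le, ← Real.log_div ht2.ne' this.ne', abs_of_nonneg]
      exact Real.log_nonneg (by rw [le_div_iff₀ this]; linarith)
    · have : ‖z‖ ≤ ‖z0‖ + 1 := by
        rw [mem_ball, dist_eq_norm] at hz
        have := norm_le_norm_add_norm_sub' z z0
        linarith
      have := h.hγ
      gcongr
  have hc : ContinuousOn (pot ν) (ball z0 1) := by
    apply hloc.continuousOn
    apply Filter.Eventually.frequently
    filter_upwards [self_mem_nhdsWithin] with t ht
    apply Continuous.continuousOn
    apply h.cont_kernel (k := fun x => Real.log (max ‖x‖ t))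
    apply Continuous.log (by fun_prop)
    intro x
    exact (lt_of_lt_of_le ht (le_max_right _ _)).ne'
  exact hc.continuousAt (ball_mem_nhds z0 one_pos)

lemma Good.pot_le {ν : Measure ℂ} {K δ γ R : ℝ} (h : Good ν K δ γ R) (z : ℂ) :
    pot ν z ≤ ν.real univ * Real.log (‖z‖ + R) := by
  have := h.fin
  have hR := h.hR
  have : ∫ w, Real.log (‖z‖ + R) ∂ν = ν.real univ * Real.log (‖z‖ + R) := by simp
  rw [← this]
  apply integral_mono_ae (h.log_integrable z) (integrable_const _)
  filter_upwards [h.supp] with w hw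
  rw [mem_ball, dist_zero_right] at hw

  rcases eq_or_lt_of_le (norm_nonneg (z - w)) with h0 | h0
  · rw [← h0, Real.log_zero]; exact Real.log_nonneg (by linarith [norm_nonneg z])
  · apply Real.log_le_log h0
    linarith [norm_sub_le z w]

lemma Good.le_pot {ν : Measure ℂ} {K δ γ R : ℝ} (h : Good ν K δ γ R) (z : ℂ) (hz : R < ‖z‖) :
    ν.real univ * Real.log (‖z‖ - R) ≤ pot ν z := by
  have := h.fin
  have : ∫ w, Real.log (‖z‖ - R) ∂ν = ν.real univ * Real.log (‖z‖ - R) := by simp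
  rw [← this]
  apply integral_mono_ae (integrable_const _) (h.log_integrable z)
  filter_upwards [h.supp] with w hw
  rw [mem_ball, dist_zero_right] at hw
  apply Real.log_le_log (by linarith)
  linarith [norm_sub_norm_le z w]

lemma Good.abs_log_integral {ν : Measure ℂ} {K δ γ R : ℝ} (h : Good ν K δ γ R) (z : ℂ) :
    ∫ w, |Real.log ‖z - w‖| ∂ν ≤ K * (1 + ‖z‖) ^ γ / δ + ν.real univ * Real.log (1 + ‖z‖ + R) := by
  have := h.fin
  have hi1 : Integrable ((ball z 1).indicator (fun w => Real.log (1 / ‖z - w‖))) ν := by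
    rw [integrable_indicator_iff measurableSet_ball]
    exact h.ctrl.log_integrableOn h.hδ z one_pos le_rfl
  calc ∫ w, |Real.log ‖z - w‖| ∂ν ≤ ∫ w, ((ball z 1).indicator (fun w => Real.log (1 / ‖z - w‖)) w
      + Real.log (1 + ‖z‖ + R)) ∂ν := by
        apply integral_mono_ae (h.log_integrable z).abs (hi1.add (integrable_const _))
        filter_upwards [h.supp] with w hw
        simp only [Pi.add_apply]
        have hR := h.hR
        have hz := norm_nonneg z
        rw [mem_ball, dist_zero_right] at hw
        have hl : 0 ≤ Real.log (1 + ‖z‖ + R) := Real.log_nonneg (by linarith)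
        by_cases hb : w ∈ ball z 1
        · have h1 := log_div_nonneg_of_ball hb
          rw [indicator_of_mem hb]
          rw [one_div, Real.log_inv] at h1 ⊢
          rw [abs_of_nonpos (by linarith)]
          linarith
        · rw [indicator_of_notMem hb, zero_add]
          rw [mem_ball, dist_comm, dist_eq_norm, not_lt] at hb
          rw [abs_of_nonneg (Real.log_nonneg hb)]
          apply Real.log_le_log (by linarith)
          linarith [norm_sub_le z w]
    _ = ∫ w in ball z 1, Real.log (1 / ‖z - w‖) ∂ν + ν.real univ * Real.log (1 + ‖z‖ + R) := by
        rw [integral_add hi1 (integrable_const _), integral_indicator measurableSet_ball]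
        simp
    _ ≤ _ := by
        gcongr
        have := h.ctrl.log_integral h.hK h.hδ z one_pos le_rfl
        simpa using this

lemma Good.pot_submean {ν : Measure ℂ} {K δ γ R : ℝ} (h : Good ν K δ γ R) (c : ℂ) {r : ℝ}
    (hr : 0 < r) : pot ν c ≤ Real.circleAverage (pot ν) c r := by
  have := h.fin
  obtain ⟨f, hf⟩ : ∃ f : ℝ × ℂ → ℝ, f = fun p => Real.log ‖circleMap c r p.1 - p.2‖ := ⟨_, rfl⟩
  have hfe : ∀ θ w, f (θ, w) = Real.log ‖circleMap c r θ - w‖ := fun θ w => by rw [hf]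
  have hmeas : Measurable f := by
    have : Measurable (circleMap c r) := (continuous_circleMap c r).measurable
    rw [hf]
    fun_prop
  have hIntg : Integrable f ((volume.restrict (Ioc 0 (2 * π))).prod ν) := by
    rw [integrable_prod_iff hmeas.aestronglyMeasurable]
    constructor
    · refine Eventually.of_forall fun θ => ?_
      simp only [hfe]
      exact h.log_integrable (circleMap c r θ)
    · apply Integrable.of_bound (C := K * (1 + (‖c‖ + r)) ^ γ / δ +
          ν.real univ * Real.log (1 + (‖c‖ + r) + R))
      · exact (hmeas.norm.aestronglyMeasurable).integral_prod_right'
      · refine Eventually.of_forall fun θ => ?_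
        rw [Real.norm_of_nonneg (integral_nonneg fun _ => norm_nonneg _)]
        have hn : ‖circleMap c r θ‖ ≤ ‖c‖ + r := by
          have := norm_le_norm_add_norm_sub' (circleMap c r θ) c
          have h2 : ‖circleMap c r θ - c‖ = r := by simp [abs_of_pos hr]
          linarith
        simp only [hfe, Real.norm_eq_abs]
        refine (h.abs_log_integral (circleMap c r θ)).trans ?_
        have := h.hK
        have := h.hδ
        have := h.hγ
        have := h.hR
        gcongr
  have key : ∀ᵐ w ∂ν, Real.log ‖c - w‖ ≤ (2 * π)⁻¹ * ∫ θ in Ioc 0 (2 * π), f (θ, w) := by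
    filter_upwards [h.ctrl.ae_ne c] with w hw
    have h1 := circleAverage_log_norm_sub_const_eq_log_radius_add_posLog (a := w) (c := c) hr.ne'
    rw [Real.circleAverage, smul_eq_mul, intervalIntegral.integral_of_le (by positivity)] at h1
    simp only [hfe]
    rw [h1]
    have h0 : 0 < ‖c - w‖ := norm_pos_iff.mpr (sub_ne_zero.mpr hw.symm)
    have h2 : Real.log (r⁻¹ * ‖c - w‖) ≤ Real.posLog (r⁻¹ * ‖c - w‖) := le_max_right _ _
    rw [Real.log_mul (by positivity) h0.ne', Real.log_inv] at h2
    linarith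
  rw [Real.circleAverage, smul_eq_mul, intervalIntegral.integral_of_le (by positivity)]
  have hswap : ∫ θ in Ioc 0 (2 * π), pot ν (circleMap c r θ)
      = ∫ w, (∫ θ in Ioc 0 (2 * π), f (θ, w)) ∂ν := by
    rw [← integral_integral_swap (f := fun θ w => f (θ, w)) hIntg]
    simp only [hfe]
    rfl
  rw [hswap, ← integral_const_mul]
  exact integral_mono_ae (h.log_integrable c) (hIntg.integral_prod_right.const_mul _) key

/-- local decomposition into holomorphic real part plus bounded part -/
lemma Good.local_decomp {ν : Measure ℂ} {K δ γ R : ℝ} (h : Good ν K δ γ R) (c : ℂ) {r : ℝ}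
    (hr : 0 < r) (hr1 : r ≤ 1) (hS : (1 + ‖c‖) ^ γ * r ^ δ ≤ 1) :
    ∃ H : ℂ → ℂ, DifferentiableOn ℂ H (ball c r) ∧ H c = 0 ∧
      ∀ z ∈ ball c r, |pot ν z - pot ν c - (H z).re| ≤ K * (2 ^ γ / δ + 1) := by
  have := h.fin
  have hK := h.hK
  have hδ := h.hδ
  have hγ := h.hγ
  set H : ℂ → ℂ := fun z => ∫ w in (ball c r)ᶜ, Complex.log ((z - w) / (c - w)) ∂ν with hH
  have hslit : ∀ z ∈ ball c r, ∀ w ∈ (ball c r)ᶜ, (z - w) / (c - w) ∈ Complex.slitPlane := by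
    intro z hz w hw
    rw [mem_compl_iff, mem_ball, dist_comm, dist_eq_norm, not_lt] at hw
    rw [mem_ball, dist_eq_norm] at hz
    have hne : c - w ≠ 0 := norm_pos_iff.mp (by linarith)
    have : (z - w) / (c - w) = 1 + (z - c) / (c - w) := by field_simp; ring
    rw [this]
    apply Complex.mem_slitPlane_of_norm_lt_one
    rw [norm_div, div_lt_one (by linarith)]
    linarith
  have hIntg : ∀ z ∈ ball c r, IntegrableOn (fun w => Complex.log ((z - w) / (c - w))) (ball c r)ᶜ ν := by
    intro z hz
    have hb : Integrable (fun w => |Real.log ‖z - w‖| + |Real.log ‖c - w‖| + π)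
      (ν.restrict (ball c r)ᶜ) :=
      (((h.log_integrable z).abs.add (h.log_integrable c).abs).add (integrable_const _)).restrict
    apply hb.mono'
    · exact Measurable.aestronglyMeasurable (by fun_prop)
    · filter_upwards [ae_restrict_mem measurableSet_ball.compl] with w hw
      rw [mem_compl_iff, mem_ball, dist_comm, dist_eq_norm, not_lt] at hw
      rw [mem_ball, dist_eq_norm] at hz
      have hne : 0 < ‖c - w‖ := by linarith
      have hne2 : 0 < ‖z - w‖ := by
        have := norm_sub_norm_le (c - w) (c - z)
        rw [show c - w - (c - z) = z - w by ring, norm_sub_rev c z] at this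
        linarith
      have h1 : ‖Complex.log ((z - w) / (c - w))‖ ≤
        |(Complex.log ((z - w) / (c - w))).re| + |(Complex.log ((z - w) / (c - w))).im| :=
        Complex.norm_le_abs_re_add_abs_im _
      rw [Complex.log_re, Complex.log_im, norm_div, Real.log_div hne2.ne' hne.ne'] at h1
      have h2 := Complex.abs_arg_le_pi ((z - w) / (c - w))
      have h3 := abs_sub (Real.log ‖z - w‖) (Real.log ‖c - w‖)
      linarith
  refine ⟨H, ?_, ?_, ?_⟩
  · intro z0 hz0
    apply DifferentiableAt.differentiableWithinAt
    have hz0' := hz0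
    rw [mem_ball, dist_eq_norm] at hz0'
    set s : ℝ := (r - ‖z0 - c‖) / 2 with hs
    have hs0 : 0 < s := by rw [hs]; linarith
    have hsub : ball z0 s ⊆ ball c r := by
      apply ball_subset_ball'; rw [dist_eq_norm]; rw [hs]; linarith
    have hlow : ∀ z ∈ ball z0 s, ∀ w ∈ (ball c r)ᶜ, s ≤ ‖z - w‖ := by
      intro z hz w hw
      rw [mem_compl_iff, mem_ball, dist_eq_norm, not_lt] at hw
      rw [mem_ball, dist_eq_norm] at hz
      have h1 := norm_add₃_le (a := w - z) (b := z - z0) (c := z0 - c)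
      rw [show w - z + (z - z0) + (z0 - c) = w - c by ring, norm_sub_rev w z] at h1
      rw [hs] at *; linarith
    refine (hasDerivAt_integral_of_dominated_loc_of_deriv_le (bound := fun _ => s⁻¹)
      (μ := ν.restrict (ball c r)ᶜ) (F := fun z w => Complex.log ((z - w) / (c - w)))
      (F' := fun z w => (z - w)⁻¹) (ball_mem_nhds z0 hs0)
      ?_ (hIntg z0 hz0) ?_ ?_ (integrable_const _) ?_).2.differentiableAt
    · exact Eventually.of_forall fun z => Measurable.aestronglyMeasurable (by fun_prop)
    · exact Measurable.aestronglyMeasurable (by fun_prop)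
    · filter_upwards [ae_restrict_mem measurableSet_ball.compl] with w hw z hz
      rw [norm_inv]
      exact inv_anti₀ hs0 (hlow z hz w hw)
    · filter_upwards [ae_restrict_mem measurableSet_ball.compl] with w hw z hz
      have h1 : HasDerivAt (fun z => (z - w) / (c - w)) (1 / (c - w)) z :=
        ((hasDerivAt_id z).sub_const w).div_const _
      have h2 := h1.clog (hslit z (hsub hz) w hw)
      have hw' := hlow z hz w hw
      have hzw : z - w ≠ 0 := norm_pos_iff.mp (by linarith)
      rw [mem_compl_iff, mem_ball, dist_comm, dist_eq_norm, not_lt] at hw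
      have hne : c - w ≠ 0 := norm_pos_iff.mp (by linarith)
      rw [div_div_eq_mul_div, one_div_mul_cancel hne, one_div] at h2
      exact h2
  · rw [hH]
    simp only
    rw [setIntegral_congr_fun (g := fun _ => 0) measurableSet_ball.compl]
    · simp
    · intro w hw
      rw [mem_compl_iff, mem_ball, dist_comm, dist_eq_norm, not_lt] at hw
      have hne : c - w ≠ 0 := norm_pos_iff.mp (by linarith)
      simp [div_self hne]
  · intro z hz
    have hre : (H z).re = ∫ w in (ball c r)ᶜ, (Real.log ‖z - w‖ - Real.log ‖c - w‖) ∂ν := by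
      rw [hH]
      simp only
      have := integral_re (𝕜 := ℂ) (hIntg z hz)
      simp only [RCLike.re_eq_complex_re] at this
      rw [← this]
      apply setIntegral_congr_fun measurableSet_ball.compl
      intro w hw
      simp only
      have hs := Complex.slitPlane_ne_zero (hslit z hz w hw)
      have h1 : z - w ≠ 0 := fun h0 => hs (by simp [h0])
      have h2 : c - w ≠ 0 := fun h0 => hs (by simp [h0])
      rw [Complex.log_re, norm_div, Real.log_div (norm_ne_zero_iff.mpr h1) (norm_ne_zero_iff.mpr h2)]
    have hsplit : pot ν z - pot ν c = ∫ w in ball c r, (Real.log ‖z - w‖ - Real.log ‖c - w‖) ∂ν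
        + ∫ w in (ball c r)ᶜ, (Real.log ‖z - w‖ - Real.log ‖c - w‖) ∂ν := by
      have hi : Integrable (fun w => Real.log ‖z - w‖ - Real.log ‖c - w‖) ν :=
        (h.log_integrable z).sub (h.log_integrable c)
      rw [integral_add_compl measurableSet_ball hi, integral_sub (h.log_integrable z) (h.log_integrable c)]
      rfl
    rw [hsplit, hre, add_sub_cancel_right]
    have hzi : ∀ z, IntegrableOn (fun w => Real.log (r / ‖z - w‖)) (ball c r) ν := by
      intro z
      have : IntegrableOn (fun w => Real.log r - Real.log ‖z - w‖) (ball c r) ν :=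
        ((integrable_const _).sub (h.log_integrable z)).integrableOn
      apply this.congr
      filter_upwards [ae_restrict_of_ae (h.ctrl.ae_ne z)] with w hw
      rw [Real.log_div hr.ne' (norm_ne_zero_iff.mpr (sub_ne_zero.mpr hw.symm))]
    have hr2 : ∫ w in ball c r, (Real.log ‖z - w‖ - Real.log ‖c - w‖) ∂ν
      = ∫ w in ball c r, Real.log (r / ‖c - w‖) ∂ν - ∫ w in ball c r, Real.log (r / ‖z - w‖) ∂ν := by
      rw [← integral_sub (hzi c) (hzi z)]
      apply integral_congr_ae
      filter_upwards [ae_restrict_of_ae (h.ctrl.ae_ne z), ae_restrict_of_ae (h.ctrl.ae_ne c)] with w hw hw2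
      rw [Real.log_div hr.ne' (norm_ne_zero_iff.mpr (sub_ne_zero.mpr hw.symm)),
        Real.log_div hr.ne' (norm_ne_zero_iff.mpr (sub_ne_zero.mpr hw2.symm))]
      ring
    rw [hr2]
    have hz' := hz
    rw [mem_ball, dist_eq_norm] at hz'
    have e1 : ∫ w in ball c r, Real.log (r / ‖c - w‖) ∂ν ≤ K / δ := by
      refine (h.ctrl.log_integral hK hδ c hr hr1).trans ?_
      rw [mul_assoc]
      gcongr
      exact mul_le_of_le_one_right hK hS
    have e2 : 0 ≤ ∫ w in ball c r, Real.log (r / ‖c - w‖) ∂ν :=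
      setIntegral_nonneg measurableSet_ball fun w hw => log_div_nonneg_of_ball hw
    have hnz : (1 + ‖z‖) ^ γ * r ^ δ ≤ 2 ^ γ := by
      have : 1 + ‖z‖ ≤ 2 * (1 + ‖c‖) := by
        have := norm_le_norm_add_norm_sub' z c
        linarith [norm_nonneg c]
      calc (1 + ‖z‖) ^ γ * r ^ δ ≤ (2 * (1 + ‖c‖)) ^ γ * r ^ δ := by gcongr
        _ = 2 ^ γ * ((1 + ‖c‖) ^ γ * r ^ δ) := by
          rw [Real.mul_rpow (by norm_num) (by positivity)]; ring
        _ ≤ 2 ^ γ := mul_le_of_le_one_right (by positivity) hS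
    have e3 : ∫ w in ball c r, Real.log (r / ‖z - w‖) ∂ν ≤ K * 2 ^ γ / δ := by
      have hb : ∫ w in ball z r, Real.log (r / ‖z - w‖) ∂ν ≤ K * 2 ^ γ / δ := by
        refine (h.ctrl.log_integral hK hδ z hr hr1).trans ?_
        rw [mul_assoc]
        gcongr
      refine le_trans ?_ hb
      rw [← integral_indicator measurableSet_ball, ← integral_indicator measurableSet_ball]
      apply integral_mono_ae
      · rw [integrable_indicator_iff measurableSet_ball]; exact hzi z
      · rw [integrable_indicator_iff measurableSet_ball]
        exact h.ctrl.log_integrableOn hδ z hr hr1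
      · filter_upwards [h.ctrl.ae_ne z] with w hw
        by_cases hb : w ∈ ball z r
        · rw [indicator_of_mem hb]
          exact indicator_le_self' (fun _ _ => log_div_nonneg_of_ball hb) w
        · rw [indicator_of_notMem hb]
          rw [mem_ball, dist_comm, dist_eq_norm, not_lt] at hb
          refine indicator_apply_le' (fun _ => ?_) (fun _ => le_rfl)
          exact Real.log_nonpos (by positivity) (div_le_one_of_le₀ hb (norm_nonneg _))
    have e4 : -K ≤ ∫ w in ball c r, Real.log (r / ‖z - w‖) ∂ν := by
      have hm : ν.real (ball c r) ≤ K := by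
        apply ENNReal.toReal_le_of_le_ofReal hK
        refine (h.ctrl.ball_le hδ c hr hr1).trans (ENNReal.ofReal_le_ofReal ?_)
        rw [mul_assoc]
        exact mul_le_of_le_one_right hK hS
      have h1 : ∫ w in ball c r, (-1 : ℝ) ∂ν ≤ ∫ w in ball c r, Real.log (r / ‖z - w‖) ∂ν := by
        apply integral_mono_ae (integrable_const _) (hzi z)
        filter_upwards [ae_restrict_mem measurableSet_ball, ae_restrict_of_ae (h.ctrl.ae_ne z)]
          with w hw hne
        rw [mem_ball, dist_comm, dist_eq_norm] at hw
        have h0 : 0 < ‖z - w‖ := norm_pos_iff.mpr (sub_ne_zero.mpr hne.symm)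
        have h2 : ‖z - w‖ ≤ 2 * r := by
          have := norm_add_le (z - c) (c - w)
          rw [sub_add_sub_cancel] at this
          linarith
        have h3 : Real.log (1 / 2) ≤ Real.log (r / ‖z - w‖) := by
          apply Real.log_le_log (by norm_num)
          rw [le_div_iff₀ h0]; linarith
        have h4 : Real.log (1 / 2) = - Real.log 2 := by rw [one_div, Real.log_inv]
        have h5 := Real.log_two_lt_d9
        linarith
      refine le_trans ?_ h1
      simp
      linarith
    have e5 : 1 ≤ (2:ℝ) ^ γ := Real.one_le_rpow (by norm_num) hγ
    have e6 : K / δ ≤ K * 2 ^ γ / δ := by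
      gcongr
      exact le_mul_of_one_le_right hK e5
    have e7 : K * (2 ^ γ / δ + 1) = K * 2 ^ γ / δ + K := by ring
    rw [e7, abs_le]
    constructor <;> linarith

/-- squared Fekete functional -/
def fekG {N : ℕ} (ψ : ℂ → ℝ) (x : Fin N → ℂ) : ℝ :=
  ∏ i, ((∏ k ∈ Finset.univ.erase i, ‖x i - x k‖) * Real.exp (-(2 * ψ (x i))))

/-- one-point functional -/
def fekA {N : ℕ} (ψ : ℂ → ℝ) (x : Fin N → ℂ) (j : Fin N) (w : ℂ) : ℝ :=
  (∏ i ∈ Finset.univ.erase j, ‖w - x i‖) * Real.exp (-ψ w)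

def fekB {N : ℕ} (ψ : ℂ → ℝ) (x : Fin N → ℂ) (j : Fin N) : ℝ :=
  ∏ i ∈ Finset.univ.erase j,
    ((∏ k ∈ (Finset.univ.erase i).erase j, ‖x i - x k‖) * Real.exp (-(2 * ψ (x i))))

lemma fekG_split {N : ℕ} (ψ : ℂ → ℝ) (x : Fin N → ℂ) (j : Fin N) :
    fekG ψ x = fekA ψ x j (x j) ^ 2 * fekB ψ x j := by
  unfold fekG fekA fekB
  rw [← Finset.mul_prod_erase _ _ (Finset.mem_univ j)]
  have h : ∀ i ∈ Finset.univ.erase j, ((∏ k ∈ Finset.univ.erase i, ‖x i - x k‖) *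
      Real.exp (-(2 * ψ (x i)))) = ‖x j - x i‖ * ((∏ k ∈ (Finset.univ.erase i).erase j, ‖x i - x k‖)
      * Real.exp (-(2 * ψ (x i)))) := by
    intro i hi
    have hj : j ∈ Finset.univ.erase i := by
      simp at hi ⊢; exact fun h => hi h.symm
    rw [← Finset.mul_prod_erase _ _ hj, norm_sub_rev (x i) (x j)]
    ring
  rw [Finset.prod_congr rfl h, Finset.prod_mul_distrib]
  have : Real.exp (-(2 * ψ (x j))) = Real.exp (-ψ (x j)) ^ 2 := by
    rw [← Real.exp_nat_mul]; congr 1; push_cast; ring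
  rw [this]; ring

lemma fekA_update {N : ℕ} (ψ : ℂ → ℝ) (x : Fin N → ℂ) (j : Fin N) (w v : ℂ) :
    fekA ψ (Function.update x j w) j v = fekA ψ x j v := by
  unfold fekA
  congr 1
  apply Finset.prod_congr rfl
  intro i hi
  rw [Function.update_of_ne (Finset.ne_of_mem_erase hi)]

lemma fekB_update {N : ℕ} (ψ : ℂ → ℝ) (x : Fin N → ℂ) (j : Fin N) (w : ℂ) :
    fekB ψ (Function.update x j w) j = fekB ψ x j := by
  unfold fekB
  apply Finset.prod_congr rfl
  intro i hi
  rw [Function.update_of_ne (Finset.ne_of_mem_erase hi)]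
  congr 1
  apply Finset.prod_congr rfl
  intro k hk
  rw [Function.update_of_ne (Finset.ne_of_mem_erase hk)]

lemma fekG_nonneg {N : ℕ} (ψ : ℂ → ℝ) (x : Fin N → ℂ) : 0 ≤ fekG ψ x := by
  unfold fekG; positivity

lemma fekG_le {N : ℕ} (ψ : ℂ → ℝ) (x : Fin N → ℂ) :
    fekG ψ x ≤ ∏ i, ((1 + ‖x i‖) ^ (N - 1) * Real.exp (-ψ (x i))) ^ 2 := by
  have h1 : ∀ i k : Fin N, ‖x i - x k‖ ≤ (1 + ‖x i‖) * (1 + ‖x k‖) := by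
    intro i k
    have := norm_sub_le (x i) (x k)
    nlinarith [norm_nonneg (x i), norm_nonneg (x k), mul_nonneg (norm_nonneg (x i)) (norm_nonneg (x k))]
  have hcard : ∀ i : Fin N, (Finset.univ.erase i).card = N - 1 := by
    intro i; rw [Finset.card_erase_of_mem (Finset.mem_univ i)]; simp
  have h2 : fekG ψ x ≤ ∏ i, ((1 + ‖x i‖) ^ (N - 1) * (∏ k ∈ Finset.univ.erase i, (1 + ‖x k‖))
      * Real.exp (-(2 * ψ (x i)))) := by
    unfold fekG
    apply Finset.prod_le_prod
    · intro i _; positivity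
    intro i _
    gcongr
    calc ∏ k ∈ Finset.univ.erase i, ‖x i - x k‖ ≤ ∏ k ∈ Finset.univ.erase i, ((1 + ‖x i‖) * (1 + ‖x k‖)) :=
          Finset.prod_le_prod (fun _ _ => norm_nonneg _) fun k _ => h1 i k
      _ = _ := by rw [Finset.prod_mul_distrib, Finset.prod_const, hcard]
  refine h2.trans (le_of_eq ?_)
  rw [Finset.prod_mul_distrib, Finset.prod_mul_distrib]
  have h3 : ∏ i, ∏ k ∈ Finset.univ.erase i, (1 + ‖x k‖) = ∏ i, (1 + ‖x i‖) ^ (N - 1) := by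
    rw [Finset.prod_comm' (t' := Finset.univ) (s' := fun k => Finset.univ.erase k)]
    · apply Finset.prod_congr rfl
      intro i _
      rw [Finset.prod_const, hcard]
    · intro a b; simp [eq_comm]
  rw [h3, ← Finset.prod_mul_distrib, ← Finset.prod_mul_distrib]
  apply Finset.prod_congr rfl
  intro i _
  have : Real.exp (-(2 * ψ (x i))) = Real.exp (-ψ (x i)) ^ 2 := by
    rw [← Real.exp_nat_mul]; congr 1; push_cast; ring
  rw [this]; ring

lemma fekete {N : ℕ} {ψ : ℂ → ℝ} (hψ : Continuous ψ)
    (hdec : Tendsto (fun z : ℂ => (1 + ‖z‖) ^ (N - 1) * Real.exp (-ψ z)) (cocompact ℂ) (𝓝 0)) :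
    ∃ x : Fin N → ℂ, Function.Injective x ∧ ∀ j w, fekA ψ x j w ≤ fekA ψ x j (x j) := by
  set g : ℂ → ℝ := fun z => ((1 + ‖z‖) ^ (N - 1) * Real.exp (-ψ z)) ^ 2 with hg
  have hgc : Continuous g := by rw [hg]; fun_prop
  have hg0 : Tendsto g (cocompact ℂ) (𝓝 0) := by
    have := hdec.pow 2
    simpa [hg] using this
  obtain ⟨M, hM1, hM⟩ : ∃ M, 1 ≤ M ∧ ∀ z, g z ≤ M := by
    have hg00 : 0 < g 0 := by simp only [hg]; positivity
    obtain ⟨z0, hz0⟩ := hgc.exists_forall_ge' 0 ((hg0.eventually_lt_const hg00).mono fun _ h => h.le)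
    exact ⟨max 1 (g z0), le_max_left _ _, fun z => (hz0 z).trans (le_max_right _ _)⟩
  have hcont : Continuous (fekG (N := N) ψ) := by
    unfold fekG
    fun_prop
  have hpos : ∀ x : Fin N → ℂ, Function.Injective x → 0 < fekG ψ x := by
    intro x hx
    unfold fekG
    apply Finset.prod_pos
    intro i _
    apply mul_pos _ (Real.exp_pos _)
    apply Finset.prod_pos
    intro k hk
    rw [norm_pos_iff, sub_ne_zero]
    exact fun h => Finset.ne_of_mem_erase hk (hx h).symm
  obtain ⟨x0, hx0⟩ : ∃ x0 : Fin N → ℂ, Function.Injective x0 :=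
    ⟨fun i => ((i : ℕ) : ℂ), fun i j h => by simpa [Fin.ext_iff] using h⟩
  have hp0 := hpos x0 hx0
  have hsmall : ∀ᶠ z in cocompact ℂ, g z * M ^ (N - 1) < fekG ψ x0 := by
    have : Tendsto (fun z => g z * M ^ (N - 1)) (cocompact ℂ) (𝓝 (0 * M ^ (N - 1))) :=
      hg0.mul_const _
    rw [zero_mul] at this
    exact this.eventually_lt_const hp0
  obtain ⟨B, hB⟩ : ∃ B : ℝ, ∀ z : ℂ, B < ‖z‖ → g z * M ^ (N - 1) < fekG ψ x0 := by
    rw [← Metric.cobounded_eq_cocompact] at hsmall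
    obtain ⟨B, -, hB⟩ := (Metric.hasBasis_cobounded_compl_closedBall (0 : ℂ)).mem_iff.mp hsmall
    refine ⟨B, fun z hz => hB ?_⟩
    simpa using hz
  have hev : ∀ᶠ x in cocompact (Fin N → ℂ), fekG ψ x ≤ fekG ψ x0 := by
    filter_upwards [(isCompact_closedBall (0 : Fin N → ℂ) (max B 0)).compl_mem_cocompact] with x hx
    rw [mem_compl_iff, mem_closedBall, dist_zero_right, pi_norm_le_iff_of_nonneg (le_max_right _ _)] at hx
    push Not at hx
    obtain ⟨i, hi⟩ := hx
    have hi' := hB _ ((le_max_left _ _).trans_lt hi)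
    refine ((fekG_le ψ x).trans ?_).trans hi'.le
    rw [← Finset.mul_prod_erase _ _ (Finset.mem_univ i)]
    have : ∏ k ∈ Finset.univ.erase i, g (x k) ≤ M ^ (N - 1) := by
      calc _ ≤ ∏ k ∈ Finset.univ.erase i, M :=
            Finset.prod_le_prod (fun _ _ => by rw [hg]; positivity) fun k _ => hM _
        _ = _ := by
            rw [Finset.prod_const, Finset.card_erase_of_mem (Finset.mem_univ i)]; simp
    exact mul_le_mul_of_nonneg_left this (by positivity)
  obtain ⟨x, hx⟩ := hcont.exists_forall_ge' x0 hev
  have hxp : 0 < fekG ψ x := hp0.trans_le (hx x0)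
  refine ⟨x, ?_, ?_⟩
  · intro i k hik
    by_contra hne
    apply hxp.ne'
    unfold fekG
    apply Finset.prod_eq_zero (Finset.mem_univ i)
    rw [Finset.prod_eq_zero (i := k), zero_mul]
    · simp [Ne.symm hne]
    · simp [hik]
  · intro j w
    have h1 := hx (Function.update x j w)
    rw [fekG_split ψ x j, fekG_split ψ (Function.update x j w) j, fekB_update, fekA_update,
      Function.update_self] at h1
    have hA : ∀ v, 0 ≤ fekA ψ x j v := fun v => by unfold fekA; positivity
    have hBp : 0 < fekB ψ x j := by
      rw [fekG_split ψ x j] at hxp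
      exact (pos_iff_pos_of_mul_pos hxp).mp (by
        rcases (sq_nonneg (fekA ψ x j (x j))).lt_or_eq with h | h
        · exact h
        · rw [← h] at hxp; simp at hxp)
    have h2 := le_of_mul_le_mul_right h1 hBp
    exact (sq_le_sq₀ (hA _) (hA _)).mp h2

lemma min_principle {s : ℂ → ℝ} {Ω : Set ℂ} (hΩ : IsClosed Ω) (hs : ContinuousOn s Ω)
    (hinf : Tendsto s (cocompact ℂ) atTop) {z0 : ℂ} (hz0 : z0 ∈ Ω)
    (hsup : ∀ c r, 0 < r → closedBall c r ⊆ Ω → Real.circleAverage s c r ≤ s c) :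
    ∃ z ∈ Ω, z ∉ interior Ω ∧ s z ≤ s z0 := by
  obtain ⟨z1, hz1, hmin⟩ := hs.exists_isMinOn' hΩ hz0
    ((hinf.eventually_ge_atTop (s z0)).filter_mono inf_le_left)
  have hmin' : ∀ z ∈ Ω, s z1 ≤ s z := fun z hz => hmin hz
  set S : Set ℂ := {z ∈ Ω | s z ≤ s z1} with hS
  have hSc : IsClosed S := hs.preimage_isClosed_of_isClosed hΩ isClosed_Iic
  have hSK : IsCompact S := by
    have h1 := hinf.eventually_gt_atTop (s z1)
    obtain ⟨t, ht, htS⟩ := mem_cocompact.mp h1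
    apply ht.of_isClosed_subset hSc
    intro z hz
    by_contra hzt
    have := htS hzt
    simp only [mem_ofPred_eq] at this
    exact absurd hz.2 (not_le.mpr this)
  obtain ⟨z, hz, hzmax⟩ := hSK.exists_isMaxOn ⟨z1, hz1, le_rfl⟩ Complex.continuous_re.continuousOn
  refine ⟨z, hz.1, fun hIntg => ?_, hz.2.trans (hmin' _ hz0)⟩
  obtain ⟨r, hr, hball⟩ := nhds_basis_closedBall.mem_iff.mp (mem_interior_iff_mem_nhds.mp hIntg)
  have h1 := hsup z r hr hball
  rw [Real.circleAverage, smul_eq_mul] at h1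
  have hmem : ∀ θ, circleMap z r θ ∈ Ω := fun θ =>
    hball (sphere_subset_closedBall (circleMap_mem_sphere z hr.le θ))
  have h2 : ∫ θ in (0:ℝ)..2 * π, s z1 < ∫ θ in (0:ℝ)..2 * π, s (circleMap z r θ) := by
    apply intervalIntegral.integral_lt_integral_of_continuousOn_of_le_of_exists_lt (by positivity)
      continuousOn_const
    · exact (hs.comp_continuous (continuous_circleMap z r) hmem).continuousOn
    · intro θ _
      exact hmin' _ (hmem θ)
    · refine ⟨0, ⟨le_rfl, by positivity⟩, ?_⟩
      by_contra hcon
      have h3 : circleMap z r 0 ∈ S := ⟨hmem 0, not_lt.mp hcon⟩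
      have h4 : (circleMap z r 0).re ≤ z.re := hzmax h3
      simp [circleMap] at h4
      linarith
  rw [intervalIntegral.integral_const, smul_eq_mul, sub_zero] at h2
  have h5 : s z1 < (2 * π)⁻¹ * ∫ θ in (0:ℝ)..2 * π, s (circleMap z r θ) := by
    rw [inv_mul_eq_div, lt_div_iff₀ (by positivity)]
    linarith
  linarith [hz.2]

/-- separation constants -/
def cB (K δ γ : ℝ) : ℝ := K * (2 ^ γ / δ + 1)
def cd (K δ γ : ℝ) : ℝ := 1 / (6 * Real.exp (cB K δ γ))
def rr (δ γ : ℝ) (c : ℂ) : ℝ := (1 + ‖c‖) ^ (-(γ / δ))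

lemma rr_pos (δ γ : ℝ) (c : ℂ) : 0 < rr δ γ c := by unfold rr; positivity

lemma rr_le_one {δ γ : ℝ} (hδ : 0 < δ) (hγ : 0 ≤ γ) (c : ℂ) : rr δ γ c ≤ 1 := by
  unfold rr
  apply Real.rpow_le_one_of_one_le_of_nonpos (by linarith [norm_nonneg c])
  have : 0 ≤ γ / δ := by positivity
  linarith

lemma rr_eq {δ γ : ℝ} (hδ : 0 < δ) (c : ℂ) : (1 + ‖c‖) ^ γ * rr δ γ c ^ δ = 1 := by
  have h0 : 0 < 1 + ‖c‖ := by positivity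
  unfold rr
  rw [← Real.rpow_mul h0.le, ← Real.rpow_add h0]
  have : γ + -(γ / δ) * δ = 0 := by field_simp; ring
  rw [this, Real.rpow_zero]

lemma cB_nonneg {K δ γ : ℝ} (hK : 0 ≤ K) (hδ : 0 < δ) : 0 ≤ cB K δ γ := by
  unfold cB; positivity

lemma fek_lower {ν : Measure ℂ} {K δ γ R : ℝ} (h : Good ν K δ γ R) {N : ℕ} {x : Fin N → ℂ}
    (hx : Function.Injective x) (hf : ∀ j w, fekA (pot ν) x j w ≤ fekA (pot ν) x j (x j))
    (j : Fin N) (z : ℂ) (hz : ‖z - x j‖ ≤ cd K δ γ * rr δ γ (x j)) :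
    1 / 2 * Real.exp (-cB K δ γ) * fekA (pot ν) x j (x j) ≤ fekA (pot ν) x j z := by
  obtain ⟨H, hH, hHc, hHb⟩ := h.local_decomp (x j) (rr_pos δ γ (x j)) (rr_le_one h.hδ h.hγ _)
    (rr_eq h.hδ (x j)).le
  have hB0 : 0 ≤ cB K δ γ := cB_nonneg h.hK h.hδ
  change ∀ z ∈ _, _ ≤ cB K δ γ at hHb
  set B := cB K δ γ with hB
  set r := rr δ γ (x j) with hr
  have hr0 : 0 < r := rr_pos _ _ _
  have hprod0 : 0 < ∏ i ∈ Finset.univ.erase j, ‖x j - x i‖ := by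
    apply Finset.prod_pos
    intro k hk
    rw [norm_pos_iff, sub_ne_zero]
    exact fun h => Finset.ne_of_mem_erase hk (hx h).symm
  set f : ℂ → ℂ := fun z => (∏ i ∈ Finset.univ.erase j, (z - x i) / (x j - x i)) * Complex.exp (-H z)
    with hfdef
  have hfd : DifferentiableOn ℂ f (ball (x j) r) := by
    apply DifferentiableOn.mul
    · apply Differentiable.differentiableOn
      fun_prop
    · exact hH.neg.cexp
  have hfn : ∀ z, ‖f z‖ * (fekA (pot ν) x j (x j)) =
      fekA (pot ν) x j z * Real.exp (pot ν z - pot ν (x j) - (H z).re) := by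
    intro z
    simp only [hfdef, fekA, norm_mul, Complex.norm_exp, Complex.neg_re, norm_prod, norm_div,
      Finset.prod_div_distrib]
    have : Real.exp (pot ν z - pot ν (x j) - (H z).re) = Real.exp (pot ν z) * Real.exp (- pot ν (x j))
        * Real.exp (-(H z).re) := by
      rw [← Real.exp_add, ← Real.exp_add]; ring_nf
    rw [this, Real.exp_neg (pot ν z)]
    have := Real.exp_ne_zero (pot ν z)
    field_simp
  have hA0 : 0 < fekA (pot ν) x j (x j) := mul_pos hprod0 (Real.exp_pos _)
  have hfc : f (x j) = 1 := by
    simp only [hfdef, hHc, neg_zero, Complex.exp_zero, mul_one]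
    apply Finset.prod_eq_one
    intro i hi
    apply div_self
    rw [sub_ne_zero]
    exact fun h => Finset.ne_of_mem_erase hi (hx h).symm
  have hfb : ∀ z ∈ ball (x j) r, ‖f z‖ ≤ Real.exp B := by
    intro z hz
    have h1 := hfn z
    have h2 : Real.exp (pot ν z - pot ν (x j) - (H z).re) ≤ Real.exp B :=
      Real.exp_le_exp.mpr ((abs_le.mp (hHb z hz)).2)
    have h3 : ‖f z‖ * (fekA (pot ν) x j (x j)) ≤ Real.exp B * fekA (pot ν) x j (x j) := by
      rw [h1, mul_comm]
      gcongr
      · unfold fekA; positivity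
      · exact hf j z
    exact le_of_mul_le_mul_right h3 hA0
  have hcd : cd K δ γ * r < r := by
    have : cd K δ γ < 1 := by
      unfold cd
      rw [div_lt_one (by positivity)]
      have := Real.add_one_le_exp B
      rw [← hB]; linarith
    nlinarith
  have hzb : z ∈ ball (x j) r := by
    rw [mem_ball, dist_eq_norm]; linarith
  have hE1 : 1 ≤ Real.exp B := Real.one_le_exp hB0
  have hsch := Complex.dist_le_div_mul_dist_of_mapsTo_ball (R₂ := 3 * Real.exp B) hfd (by
    intro w hw
    rw [hfc, mem_closedBall, dist_eq_norm]
    have := norm_sub_le (f w) 1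
    have := hfb w hw
    simp only [norm_one] at *
    linarith) hzb
  rw [hfc, dist_eq_norm, dist_eq_norm] at hsch
  have hhalf : ‖f z - 1‖ ≤ 1 / 2 := by
    refine hsch.trans ?_
    calc 3 * Real.exp B / r * ‖z - x j‖ ≤ 3 * Real.exp B / r * (cd K δ γ * r) := by gcongr
      _ = 1 / 2 := by
        unfold cd
        rw [← hB]
        field_simp
        norm_num
  have hfz : 1 / 2 ≤ ‖f z‖ := by
    have := norm_sub_norm_le (1 : ℂ) (1 - f z)
    rw [norm_sub_rev 1 (f z), sub_sub_cancel, norm_one] at this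
    linarith
  have h1 := hfn z
  have h2 : Real.exp (pot ν z - pot ν (x j) - (H z).re) ≤ Real.exp B :=
    Real.exp_le_exp.mpr ((abs_le.mp (hHb z hzb)).2)
  have hAz : 0 ≤ fekA (pot ν) x j z := by unfold fekA; positivity
  have h3 : 1 / 2 * fekA (pot ν) x j (x j) ≤ fekA (pot ν) x j z * Real.exp B := by
    calc _ ≤ ‖f z‖ * fekA (pot ν) x j (x j) := by gcongr
      _ = _ := h1
      _ ≤ _ := by gcongr
  calc 1 / 2 * Real.exp (-B) * fekA (pot ν) x j (x j)
      = Real.exp (-B) * (1 / 2 * fekA (pot ν) x j (x j)) := by ring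
    _ ≤ Real.exp (-B) * (fekA (pot ν) x j z * Real.exp B) := by gcongr
    _ = fekA (pot ν) x j z * (Real.exp (-B) * Real.exp B) := by ring
    _ = _ := by rw [← Real.exp_add]; simp

lemma fek_decay {ν : Measure ℂ} {K δ γ R : ℝ} (h : Good ν K δ γ R) {N : ℕ} (hN1 : 1 ≤ N)
    (hN : (N : ℝ) - 1 < ν.real univ) :
    Tendsto (fun z : ℂ => (1 + ‖z‖) ^ (N - 1) * Real.exp (-pot ν z)) (cocompact ℂ) (𝓝 0) := by
  set T := ν.real univ with hT
  have hT0 : 0 ≤ T := measureReal_nonneg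
  have hu : Tendsto (fun z : ℂ => 1 + ‖z‖) (cocompact ℂ) atTop :=
    tendsto_atTop_add_const_left _ _ (tendsto_norm_cocompact_atTop)
  have hlim : Tendsto (fun z : ℂ => (4:ℝ) ^ T * (1 + ‖z‖) ^ (-(T - (N - 1)))) (cocompact ℂ) (𝓝 0) := by
    have := ((tendsto_rpow_neg_atTop (y := T - (N - 1)) (by linarith)).comp hu).const_mul ((4:ℝ) ^ T)
    simpa using this
  refine tendsto_of_tendsto_of_tendsto_of_le_of_le' tendsto_const_nhds hlim
    (Eventually.of_forall fun z => by positivity) ?_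
  filter_upwards [tendsto_norm_cocompact_atTop.eventually_ge_atTop (2 * R + 1)] with z hz
  have hR := h.hR
  have h1 := h.le_pot z (by linarith)
  have h2 : Real.log ((1 + ‖z‖) / 4) ≤ Real.log (‖z‖ - R) :=
    Real.log_le_log (by positivity) (by linarith)
  have h0 : 0 < 1 + ‖z‖ := by positivity
  have h3 : T * Real.log ((1 + ‖z‖) / 4) ≤ pot ν z := by
    refine le_trans ?_ h1
    gcongr
  rw [Real.log_div h0.ne' (by norm_num)] at h3
  calc (1 + ‖z‖) ^ (N - 1) * Real.exp (-pot ν z)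
      ≤ (1 + ‖z‖) ^ (N - 1) * Real.exp (T * Real.log 4 + Real.log (1 + ‖z‖) * (-T)) := by
        gcongr; linarith
    _ = (4:ℝ) ^ T * (1 + ‖z‖) ^ (-(T - (N - 1))) := by
        rw [Real.exp_add, ← Real.rpow_def_of_pos h0, ← Real.rpow_natCast, Nat.cast_sub hN1, mul_comm T,
          ← Real.rpow_def_of_pos (by norm_num : (0:ℝ) < 4), mul_left_comm, ← Real.rpow_add h0]
        congr 2
        push_cast; ring

lemma fek_growth {τ : Measure ℂ} {K δ γ R : ℝ} (h : Good τ K δ γ R) {N : ℕ}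
    (hN : τ.real univ < N) (x : Fin N → ℂ) :
    Tendsto (fun z : ℂ => ∑ i, Real.log ‖z - x i‖ - pot τ z) (cocompact ℂ) atTop := by
  set T := τ.real univ with hT
  have hT0 : 0 ≤ T := measureReal_nonneg
  have hu : Tendsto (fun z : ℂ => 1 + ‖z‖) (cocompact ℂ) atTop :=
    tendsto_atTop_add_const_left _ _ (tendsto_norm_cocompact_atTop)
  have hR := h.hR
  have hlim : Tendsto (fun z : ℂ => (N - T) * Real.log (1 + ‖z‖) - (N * Real.log 4 + T * Real.log (1 + R)))
      (cocompact ℂ) atTop :=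
    tendsto_atTop_add_const_right _ _ ((Real.tendsto_log_atTop.comp hu).const_mul_atTop (by linarith))
  refine tendsto_atTop_mono' _ ?_ hlim
  filter_upwards [tendsto_norm_cocompact_atTop.eventually_ge_atTop (2 * ‖x‖ + 1)] with z hz
  have h0 : 0 < 1 + ‖z‖ := by positivity
  have h1 := h.pot_le z
  have h2 : Real.log (‖z‖ + R) ≤ Real.log (1 + ‖z‖) + Real.log (1 + R) := by
    rw [← Real.log_mul h0.ne' (by linarith)]
    apply Real.log_le_log (by positivity)
    nlinarith [norm_nonneg z]
  have h3 : T * Real.log (‖z‖ + R) ≤ T * (Real.log (1 + ‖z‖) + Real.log (1 + R)) := by gcongr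
  have h4 : ∑ i : Fin N, (Real.log (1 + ‖z‖) - Real.log 4) ≤ ∑ i, Real.log ‖z - x i‖ := by
    apply Finset.sum_le_sum
    intro i _
    rw [← Real.log_div h0.ne' (by norm_num)]
    apply Real.log_le_log (by positivity)
    have := norm_sub_norm_le z (x i)
    have := norm_le_pi_norm x i
    have := norm_nonneg x
    linarith
  simp at h4
  linarith

lemma pot_add {τ σ : Measure ℂ} {K δ γ R : ℝ} (h : Good (τ + σ) K δ γ R) (z : ℂ) :
    pot (τ + σ) z = pot τ z + pot σ z := by
  unfold pot
  have := h.log_integrable z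
  rw [integral_add_measure (this.mono_measure (Measure.le_add_right le_rfl))
    (this.mono_measure (Measure.le_add_left le_rfl))]

lemma Good.mono {ν ν' : Measure ℂ} {K δ γ R : ℝ} (h : Good ν K δ γ R) (hle : ν' ≤ ν) :
    Good ν' K δ γ R := by
  have := h.fin
  exact ⟨h.ctrl.mono hle, isFiniteMeasure_of_le ν hle, h.supp.filter_mono (ae_mono hle),
    h.hK, h.hδ, h.hγ, h.hR⟩

lemma fek_main {τ σ : Measure ℂ} {K δ γ R a C1 : ℝ} (h : Good (τ + σ) K δ γ R)
    (hσ : 0 < σ.real univ) (ha : 1 + γ / δ ≤ a)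
    (hpσ : ∀ z, a * Real.log (1 + ‖z‖) - C1 ≤ pot σ z - pot σ 0) :
    ∃ P : ℂ → ℂ, Differentiable ℂ P ∧ P 0 = 1 ∧ ∀ z, ‖P z‖ ≤
      2 * Real.exp (cB K δ γ) / cd K δ γ * Real.exp C1 * 2 ^ (1 + γ / δ)
        * (1 + ‖z‖) * Real.exp (pot (τ + σ) z - pot (τ + σ) 0) := by
  have hfin := h.fin
  have hτ : Good τ K δ γ R := h.mono (Measure.le_add_right le_rfl)
  have hσ' : Good σ K δ γ R := h.mono (Measure.le_add_left le_rfl)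
  have := hτ.fin
  have := hσ'.fin
  have hδ := h.hδ
  have hγ := h.hγ
  set ψ := pot (τ + σ) with hψ
  set T := (τ + σ).real univ with hT
  have hTeq : T = τ.real univ + σ.real univ := by
    rw [hT, measureReal_add_apply]
  have hT0 : 0 < T := by
    have : 0 ≤ τ.real univ := measureReal_nonneg
    linarith
  set N := ⌈T⌉₊ with hN
  have hN1 : 1 ≤ N := Nat.one_le_ceil_iff.mpr hT0
  have hNT : T ≤ N := Nat.le_ceil T
  have hNT' : (N : ℝ) - 1 < T := by
    have := Nat.ceil_lt_add_one hT0.le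
    linarith
  obtain ⟨x, hx, hf⟩ := fekete (N := N) h.pot_continuous (fek_decay h hN1 hNT')
  change ∀ j w, fekA ψ x j w ≤ fekA ψ x j (x j) at hf
  have hB0 : 0 ≤ cB K δ γ := cB_nonneg h.hK h.hδ
  set B := cB K δ γ with hB
  have hE1 : 1 ≤ Real.exp B := Real.one_le_exp hB0
  set d := cd K δ γ with hd
  have hd0 : 0 < d := by rw [hd]; unfold cd; positivity
  have hd1 : d ≤ 1 := by
    rw [hd]; unfold cd
    rw [div_le_one (by positivity), ← hB]; linarith
  have hC1 : 0 ≤ C1 := by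
    have := hpσ 0
    simp at this
    exact this
  have hlow := fek_lower h hx hf
  have hκ : ∀ j, 0 < fekA ψ x j (x j) := by
    intro j
    apply mul_pos _ (Real.exp_pos _)
    apply Finset.prod_pos
    intro k hk
    rw [norm_pos_iff, sub_ne_zero]
    exact fun h => Finset.ne_of_mem_erase hk (hx h).symm
  have hfekA : ∀ j z, ∏ i ∈ Finset.univ.erase j, ‖z - x i‖ = fekA ψ x j z * Real.exp (ψ z) := by
    intro j z
    unfold fekA
    rw [mul_assoc, ← Real.exp_add]; simp
  by_cases hcase : ∃ j, ‖0 - x j‖ ≤ d * rr δ γ (x j)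
  · obtain ⟨j, hj⟩ := hcase
    have h1 := hlow j 0 hj
    have hpos : 0 < fekA ψ x j 0 := lt_of_lt_of_le (by have := hκ j; positivity) h1
    have hne : ∏ i ∈ Finset.univ.erase j, (0 - x i) ≠ 0 := by
      rw [← norm_pos_iff, norm_prod, hfekA j 0]
      positivity
    refine ⟨fun z => (∏ i ∈ Finset.univ.erase j, (z - x i)) / ∏ i ∈ Finset.univ.erase j, (0 - x i),
      by fun_prop, div_self hne, fun z => ?_⟩
    rw [norm_div, norm_prod, norm_prod, hfekA, hfekA, div_le_iff₀ (by positivity)]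
    have hbig : 1 ≤ 1 / d * Real.exp C1 * 2 ^ (1 + γ / δ) * (1 + ‖z‖) := by
      have e1 : 1 ≤ 1 / d := by rw [one_le_div hd0]; exact hd1
      have e2 : 1 ≤ Real.exp C1 := Real.one_le_exp hC1
      have e3 : (1:ℝ) ≤ 2 ^ (1 + γ / δ) := Real.one_le_rpow (by norm_num) (by positivity)
      have e4 : 1 ≤ 1 + ‖z‖ := by linarith [norm_nonneg z]
      exact one_le_mul_of_one_le_of_one_le (one_le_mul_of_one_le_of_one_le
        (one_le_mul_of_one_le_of_one_le e1 e2) e3) e4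
    have h2 : fekA ψ x j z ≤ 2 * Real.exp B * fekA ψ x j 0 := by
      refine (hf j z).trans ?_
      calc fekA ψ x j (x j) = 2 * (Real.exp B * Real.exp (-B)) * (1 / 2) * fekA ψ x j (x j) := by
            rw [← Real.exp_add]; simp
        _ = 2 * Real.exp B * (1 / 2 * Real.exp (-B) * fekA ψ x j (x j)) := by ring
        _ ≤ _ := by gcongr
    calc fekA ψ x j z * Real.exp (ψ z) ≤ 2 * Real.exp B * fekA ψ x j 0 * Real.exp (ψ z) * 1 := by
          rw [mul_one]; gcongr
      _ ≤ 2 * Real.exp B * fekA ψ x j 0 * Real.exp (ψ z) *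
          (1 / d * Real.exp C1 * 2 ^ (1 + γ / δ) * (1 + ‖z‖)) := by gcongr
      _ = 2 * Real.exp B * fekA ψ x j 0 * (Real.exp (ψ z - ψ 0) * Real.exp (ψ 0)) *
          (1 / d * Real.exp C1 * 2 ^ (1 + γ / δ) * (1 + ‖z‖)) := by
          rw [← Real.exp_add]; simp
      _ = _ := by ring
  · push Not at hcase
    set Ω : Set ℂ := ⋂ j, {z | d * rr δ γ (x j) ≤ ‖z - x j‖} with hΩ
    have hΩc : IsClosed Ω := isClosed_iInter fun j => isClosed_le (by fun_prop) (by fun_prop)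
    have hΩmem : ∀ z, z ∈ Ω ↔ ∀ j, d * rr δ γ (x j) ≤ ‖z - x j‖ := by intro z; simp [hΩ]
    have hΩpos : ∀ z ∈ Ω, ∀ j, 0 < ‖z - x j‖ := fun z hz j =>
      lt_of_lt_of_le (mul_pos hd0 (rr_pos _ _ _)) ((hΩmem z).mp hz j)
    have h0Ω : (0:ℂ) ∈ Ω := (hΩmem 0).mpr fun j => (hcase j).le
    set s : ℂ → ℝ := fun z => ∑ i, Real.log ‖z - x i‖ - pot τ z with hs
    have hsc : ContinuousOn s Ω := by
      apply ContinuousOn.sub _ hτ.pot_continuous.continuousOn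
      apply continuousOn_finsetSum
      intro i _
      apply ContinuousOn.log (by fun_prop)
      intro z hz
      exact (hΩpos z hz i).ne'
    have hτN : τ.real univ < N := by linarith
    obtain ⟨zs, hzs, hzb, hzm⟩ := min_principle hΩc hsc (fek_growth hτ hτN x) h0Ω (by
      intro c r hr hsub
      have hh : InnerProductSpace.HarmonicOnNhd (fun z => ∑ i, Real.log ‖z - x i‖) (closedBall c |r|) := by
        intro z hz
        rw [abs_of_pos hr] at hz
        have := AnalyticAt.harmonicAt_log_norm (f := fun z => ∏ i, (z - x i)) (z := z)
          (by fun_prop) (by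
            rw [Finset.prod_ne_zero_iff]
            intro i _
            exact norm_pos_iff.mp (hΩpos z (hsub hz) i))
        rw [InnerProductSpace.harmonicAt_congr_nhds (f₂ := fun z => Real.log ‖∏ i, (z - x i)‖)]
        · exact this
        · have : ∀ i, ∀ᶠ w in 𝓝 z, w - x i ≠ 0 := by
            intro i
            apply ContinuousAt.eventually_ne (by fun_prop)
            exact norm_pos_iff.mp (hΩpos z (hsub hz) i)
          filter_upwards [eventually_all.mpr this] with w hw
          rw [norm_prod, Real.log_prod (fun i _ => norm_ne_zero_iff.mpr (hw i))]
      have e1 := hh.circleAverage_eq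
      have e2 := hτ.pot_submean c hr
      have e3 : Real.circleAverage s c r = Real.circleAverage (fun z => ∑ i, Real.log ‖z - x i‖) c r
          - Real.circleAverage (pot τ) c r := by
        apply Real.circleAverage_sub
        · apply ContinuousOn.circleIntegrable'
          intro z hz
          exact (hh z (sphere_subset_closedBall hz)).1.continuousAt.continuousWithinAt
        · exact hτ.pot_continuous.continuousOn.circleIntegrable'
      rw [e3, e1]
      simp only [hs]
      linarith)
    obtain ⟨k, hk⟩ : ∃ k, ‖zs - x k‖ = d * rr δ γ (x k) := by
      by_contra hcon
      push Not at hcon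
      apply hzb
      rw [mem_interior_iff_mem_nhds]
      have : ∀ j, ∀ᶠ w in 𝓝 zs, d * rr δ γ (x j) < ‖w - x j‖ := by
        intro j
        have hc : ContinuousAt (fun w => ‖w - x j‖) zs := by fun_prop
        exact hc.eventually (lt_mem_nhds (lt_of_le_of_ne ((hΩmem zs).mp hzs j) (hcon j).symm))
      filter_upwards [eventually_all.mpr this] with w hw
      exact (hΩmem w).mpr fun j => (hw j).le
    have hprod : ∀ z, ∏ i, ‖z - x i‖ = ‖z - x k‖ * (fekA ψ x k z * Real.exp (ψ z)) := by
      intro z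
      rw [← hfekA, Finset.mul_prod_erase Finset.univ (fun i => ‖z - x i‖) (Finset.mem_univ k)]
    have hexps : ∀ z ∈ Ω, Real.exp (s z) = (∏ i, ‖z - x i‖) * Real.exp (- pot τ z) := by
      intro z hz
      simp only [hs]
      rw [sub_eq_add_neg, Real.exp_add, Real.exp_sum]
      congr 1
      apply Finset.prod_congr rfl
      intro i _
      exact Real.exp_log (hΩpos z hz i)
    have hF0 : d * rr δ γ (x k) * (1 / 2 * Real.exp (-B) * fekA ψ x k (x k)) * Real.exp (pot σ zs)
        * Real.exp (pot τ 0) ≤ ∏ i, ‖0 - x i‖ := by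
      have e1 : Real.exp (s zs) ≤ Real.exp (s 0) := Real.exp_le_exp.mpr hzm
      rw [hexps zs hzs, hexps 0 h0Ω, hprod zs, hk] at e1
      have e2 := hlow k zs hk.le
      have e3 : Real.exp (ψ zs) = Real.exp (pot τ zs) * Real.exp (pot σ zs) := by
        rw [← Real.exp_add, hψ, pot_add h]
      rw [e3] at e1
      have e4 : Real.exp (pot τ zs) * Real.exp (-pot τ zs) = 1 := by rw [← Real.exp_add]; simp
      have e5 : Real.exp (-pot τ 0) * Real.exp (pot τ 0) = 1 := by rw [← Real.exp_add]; simp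
      have hrk := rr_pos δ γ (x k)
      calc _ ≤ d * rr δ γ (x k) * fekA ψ x k zs * Real.exp (pot σ zs) * Real.exp (pot τ 0) := by
            gcongr
        _ = (d * rr δ γ (x k) * (fekA ψ x k zs * (Real.exp (pot τ zs) * Real.exp (pot σ zs)))
            * Real.exp (-pot τ zs)) * Real.exp (pot τ 0) := by
            linear_combination (-(d * rr δ γ (x k) * fekA ψ x k zs * Real.exp (pot σ zs)
              * Real.exp (pot τ 0))) * e4
        _ ≤ ((∏ i, ‖0 - x i‖) * Real.exp (-pot τ 0)) * Real.exp (pot τ 0) := by gcongr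
        _ = _ := by rw [mul_assoc, e5, mul_one]
    have hrk := rr_pos δ γ (x k)
    have hκk := hκ k
    have hF0pos : 0 < ∏ i, ‖0 - x i‖ := lt_of_lt_of_le (by positivity) hF0
    refine ⟨fun z => (∏ i, (z - x i)) / ∏ i, (0 - x i), by fun_prop, div_self ?_, fun z => ?_⟩
    · rw [← norm_pos_iff, norm_prod]; exact hF0pos
    rw [norm_div, norm_prod, norm_prod, div_le_iff₀ hF0pos, hprod z]
    have hxk : 1 + ‖x k‖ ≤ 2 * (1 + ‖zs‖) := by
      have e1 := norm_sub_norm_le (x k) zs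
      rw [norm_sub_rev, hk] at e1
      have e2 : d * rr δ γ (x k) ≤ 1 := mul_le_one₀ hd1 hrk.le (rr_le_one hδ hγ _)
      linarith [norm_nonneg zs]
    have hzk : ‖z - x k‖ ≤ (1 + ‖z‖) * (1 + ‖x k‖) := by
      have := norm_sub_le z (x k)
      nlinarith [norm_nonneg z, norm_nonneg (x k), mul_nonneg (norm_nonneg z) (norm_nonneg (x k))]
    have hkey : 1 + ‖x k‖ ≤ Real.exp C1 * 2 ^ (1 + γ / δ) * rr δ γ (x k) * Real.exp (pot σ zs - pot σ 0) := by
      have h0 : 0 < 1 + ‖x k‖ := by positivity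
      have h0' : 1 ≤ 1 + ‖zs‖ := by linarith [norm_nonneg zs]
      have e1 : (1 + ‖zs‖) ^ (1 + γ / δ) ≤ Real.exp C1 * Real.exp (pot σ zs - pot σ 0) := by
        calc (1 + ‖zs‖) ^ (1 + γ / δ) ≤ (1 + ‖zs‖) ^ a := Real.rpow_le_rpow_of_exponent_le h0' ha
          _ = Real.exp (a * Real.log (1 + ‖zs‖)) := by
            rw [Real.rpow_def_of_pos (by linarith), mul_comm]
          _ ≤ _ := by
            rw [← Real.exp_add]
            apply Real.exp_le_exp.mpr
            linarith [hpσ zs]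
      have e2 : (1 + ‖x k‖) ^ (1 + γ / δ) ≤ 2 ^ (1 + γ / δ) * (1 + ‖zs‖) ^ (1 + γ / δ) := by
        rw [← Real.mul_rpow (by norm_num) (by positivity)]
        gcongr
      have e3 : 1 + ‖x k‖ = (1 + ‖x k‖) ^ (1 + γ / δ) * rr δ γ (x k) := by
        unfold rr
        rw [← Real.rpow_add h0]
        simp
      calc 1 + ‖x k‖ = (1 + ‖x k‖) ^ (1 + γ / δ) * rr δ γ (x k) := e3
        _ ≤ (2 ^ (1 + γ / δ) * (Real.exp C1 * Real.exp (pot σ zs - pot σ 0))) * rr δ γ (x k) := by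
          gcongr
          exact e2.trans (by gcongr)
        _ = _ := by ring
    have hfin : ‖z - x k‖ * (fekA ψ x k z * Real.exp (ψ z)) ≤ ((1 + ‖z‖) *
        (Real.exp C1 * 2 ^ (1 + γ / δ) * rr δ γ (x k) * Real.exp (pot σ zs - pot σ 0))) *
        (fekA ψ x k (x k) * Real.exp (ψ z)) := by
      gcongr
      · exact mul_nonneg (by unfold fekA; positivity) (Real.exp_pos _).le
      · exact hzk.trans (by gcongr)
      · exact hf k z
    refine hfin.trans ?_
    have e1 : Real.exp (ψ z) = Real.exp (ψ z - ψ 0) * (Real.exp (pot τ 0) * Real.exp (pot σ 0)) := by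
      rw [← Real.exp_add, ← Real.exp_add, ← pot_add h]; simp [hψ]
    have e2 : Real.exp (pot σ zs) = Real.exp (pot σ zs - pot σ 0) * Real.exp (pot σ 0) := by
      rw [← Real.exp_add]; simp
    have e3 : Real.exp B * Real.exp (-B) = 1 := by rw [← Real.exp_add]; simp
    calc _ = 2 * Real.exp B / d * Real.exp C1 * 2 ^ (1 + γ / δ) * (1 + ‖z‖) * Real.exp (ψ z - ψ 0) *
          (d * rr δ γ (x k) * (1 / 2 * Real.exp (-B) * fekA ψ x k (x k)) * Real.exp (pot σ zs)
        * Real.exp (pot τ 0)) := by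
          rw [e1, e2]
          field_simp
          linear_combination (-1 : ℝ) * e3
      _ ≤ _ := by gcongr

lemma pot_lower {σ : Measure ℂ} {K δ γ R0 a A : ℝ} (h : Good σ K δ γ R0)
    (ha : a ≤ σ.real univ) (hA : σ.real univ ≤ A) (z : ℂ) :
    a * Real.log (1 + ‖z‖) - (A * Real.log (2 + R0) + K * (2 + R0) ^ γ / δ + A * Real.log R0)
      ≤ pot σ z - pot σ 0 := by
  have := h.fin
  have hR := h.hR
  have hK := h.hK
  have hδ := h.hδ
  have hγ := h.hγ
  have h1 : pot σ 0 ≤ A * Real.log R0 := by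
    have := h.pot_le 0
    rw [norm_zero, zero_add] at this
    refine this.trans ?_
    have := Real.log_nonneg hR
    gcongr
  have hi : IntegrableOn (fun w => Real.log (1 / ‖z - w‖)) (ball z 1) σ :=
    h.ctrl.log_integrableOn hδ z one_pos le_rfl
  have hi1 : Integrable ((ball z 1).indicator (fun w => Real.log (1 / ‖z - w‖))) σ := by
    rwa [integrable_indicator_iff measurableSet_ball]
  have hloc : ∫ w in ball z 1, Real.log (1 / ‖z - w‖) ∂σ ≤ K * (2 + R0) ^ γ / δ := by
    by_cases hz : ‖z‖ < R0 + 1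
    · refine (h.ctrl.log_integral hK hδ z one_pos le_rfl).trans ?_
      rw [Real.one_rpow, mul_one]
      have := Real.rpow_le_rpow (by positivity) (show 1 + ‖z‖ ≤ 2 + R0 by linarith) hγ
      gcongr K * ?_ / δ
    · have hz0 : σ (ball z 1) = 0 := by
        apply measure_mono_null _ (ae_iff.mp h.supp)
        intro w hw
        rw [mem_ball, dist_eq_norm] at hw
        simp only [mem_ofPred_eq, mem_ball, dist_zero_right, not_lt]
        have := norm_sub_norm_le z w
        rw [norm_sub_rev] at this
        linarith
      rw [setIntegral_measure_zero _ hz0]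
      positivity
  have h2 : ∫ w, (Real.log (1 + ‖z‖) - Real.log (2 + R0) -
      (ball z 1).indicator (fun w => Real.log (1 / ‖z - w‖)) w) ∂σ ≤ pot σ z := by
    apply integral_mono_ae ((integrable_const _).sub hi1) (h.log_integrable z)
    filter_upwards [h.supp] with w hw
    simp only [Pi.sub_apply]
    have hz0 := norm_nonneg z
    rw [mem_ball, dist_zero_right] at hw
    have htri := norm_sub_norm_le z w
    by_cases hb : w ∈ ball z 1
    · rw [indicator_of_mem hb, one_div, Real.log_inv]
      rw [mem_ball, dist_comm, dist_eq_norm] at hb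
      have : Real.log (1 + ‖z‖) ≤ Real.log (2 + R0) := Real.log_le_log (by positivity) (by linarith)
      linarith
    · rw [indicator_of_notMem hb]
      rw [mem_ball, dist_comm, dist_eq_norm, not_lt] at hb
      have : Real.log (1 + ‖z‖) ≤ Real.log (2 + R0) + Real.log ‖z - w‖ := by
        rw [← Real.log_mul (by positivity) (by positivity)]
        apply Real.log_le_log (by positivity)
        nlinarith
      linarith
  rw [integral_sub (integrable_const _) hi1, integral_indicator measurableSet_ball] at h2
  simp only [integral_const, smul_eq_mul] at h2
  have h3 : a * Real.log (1 + ‖z‖) ≤ σ.real univ * Real.log (1 + ‖z‖) := by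
    have : 0 ≤ Real.log (1 + ‖z‖) := Real.log_nonneg (by linarith [norm_nonneg z])
    gcongr
  have h4 : σ.real univ * Real.log (2 + R0) ≤ A * Real.log (2 + R0) := by
    have : 0 ≤ Real.log (2 + R0) := Real.log_nonneg (by linarith)
    gcongr
  rw [mul_sub] at h2
  linarith

lemma good_of_doubling {μ : Measure ℂ} {D : ℝ≥0} {K δ γ R c : ℝ} (hμ : IsDoubling μ D)
    (h1 : μ (ball 0 1) = 1) (hK : 0 < K) (hδ : 0 < δ) (hγ : 0 ≤ γ) (hR : 1 ≤ R) (hc : 0 ≤ c)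
    (h : Ctrl μ K δ γ) : Good (ENNReal.ofReal c • μ.restrict (ball 0 R)) (c * K) δ γ R where
  ctrl := (h.mono Measure.restrict_le_self).smul hc
  fin := by
    have : IsFiniteMeasure (μ.restrict (ball 0 R)) :=
      ⟨by rw [Measure.restrict_apply_univ]; exact (doubling_ball_finite hμ h1 R).lt_top⟩
    exact Measure.smul_finite _ ENNReal.ofReal_ne_top
  supp := by
    apply Measure.ae_smul_measure
    exact ae_restrict_mem measurableSet_ball
  hK := by positivity
  hδ := hδ
  hγ := hγ
  hR := hR

lemma poly_peak (D : ℝ≥0) (hD : 1 ≤ D) {c : ℝ} (hc : 0 < c) (M : ℝ) :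
    ∃ C R1 : ℝ, 0 < C ∧ 1 ≤ R1 ∧ ∀ μ : Measure ℂ, IsDoubling μ D → μ (ball 0 1) = 1 → ∀ R, R1 ≤ R →
      ∃ P : ℂ → ℂ, Differentiable ℂ P ∧ P 0 = 1 ∧ ∀ z, ‖P z‖ ≤ C * (1 + ‖z‖) ^ (-M) *
        Real.exp (pot (ENNReal.ofReal c • μ.restrict (ball 0 R)) z
          - pot (ENNReal.ofReal c • μ.restrict (ball 0 R)) 0) := by
  obtain ⟨K, δ, γ, hK, hδ, hγ, hctrl⟩ := doubling_ctrl D hD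
  set a := max (M + 1) (1 + γ / δ) with ha
  have ha1 : 1 + γ / δ ≤ a := le_max_right _ _
  have ha0 : 0 < a := lt_of_lt_of_le (by positivity) ha1
  obtain ⟨R0, hR0, hlarge⟩ := doubling_large D (2 * a / c)
  obtain ⟨n, hn⟩ := pow_unbounded_of_one_lt R0 (one_lt_two (α := ℝ))
  set A : ℝ := c / 2 * (D : ℝ) ^ n with hA
  set C1 : ℝ := A * Real.log (2 + R0) + c / 2 * K * (2 + R0) ^ γ / δ + A * Real.log R0 with hC1
  set K' := c * K with hK'
  refine ⟨2 * Real.exp (cB K' δ γ) / cd K' δ γ * Real.exp C1 * 2 ^ (1 + γ / δ) * Real.exp C1, R0,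
    ?_, hR0, ?_⟩
  · have : 0 < cd K' δ γ := by unfold cd; positivity
    positivity
  intro μ hμ h1 R hR
  have hctr := hctrl μ hμ h1
  set ν := ENNReal.ofReal c • μ.restrict (ball 0 R) with hν
  set σ := ENNReal.ofReal (c / 2) • μ.restrict (ball 0 R0) with hσ
  set τ := ENNReal.ofReal c • μ.restrict (ball 0 R \ ball 0 R0) with hτ
  have hGν : Good ν K' δ γ R := good_of_doubling hμ h1 hK hδ hγ (hR0.trans hR) hc.le hctr
  have hGσ : Good σ (c / 2 * K) δ γ R0 := good_of_doubling hμ h1 hK hδ hγ hR0 (by positivity) hctr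
  have hsum : ν = (τ + σ) + σ := by
    rw [hν, hτ, hσ, add_assoc, ← add_smul, ← ENNReal.ofReal_add (by positivity) (by positivity),
      add_halves, ← smul_add]
    congr 1
    have := Measure.restrict_inter_add_sdiff (μ := μ) (ball (0:ℂ) R) (measurableSet_ball (x := (0:ℂ)) (ε := R0))
    rw [inter_eq_self_of_subset_right (ball_subset_ball hR), add_comm] at this
    exact this.symm
  have hle : τ + σ ≤ ν := by rw [hsum]; exact Measure.le_add_right le_rfl
  have hG := hGν.mono hle
  have hmass : σ.real univ = c / 2 * (μ (ball 0 R0)).toReal := by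
    rw [hσ, Measure.real, Measure.smul_apply, Measure.restrict_apply_univ, smul_eq_mul,
      ENNReal.toReal_mul, ENNReal.toReal_ofReal (by positivity)]
  have hfinb := doubling_ball_finite hμ h1 R0
  have hmass1 : a ≤ σ.real univ := by
    rw [hmass]
    have := ENNReal.toReal_mono hfinb (hlarge μ hμ h1)
    rw [ENNReal.toReal_ofReal (by positivity)] at this
    calc a = c / 2 * (2 * a / c) := by field_simp
      _ ≤ _ := by gcongr
  have hmass2 : σ.real univ ≤ A := by
    rw [hmass, hA]
    gcongr
    have h2 := doubling_iter hμ 0 one_pos n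
    rw [h1, mul_one, mul_one] at h2
    have h3 := (measure_mono (ball_subset_ball hn.le)).trans h2
    have h4 := ENNReal.toReal_mono (ENNReal.pow_ne_top ENNReal.coe_ne_top) h3
    simpa using h4
  have hlow := pot_lower hGσ hmass1 hmass2
  obtain ⟨P, hP, hP0, hPb⟩ := fek_main hG (ha0.trans_le hmass1) ha1 hlow
  refine ⟨P, hP, hP0, fun z => (hPb z).trans ?_⟩
  have hpn : ∀ z, pot ν z = pot (τ + σ) z + pot σ z := by
    intro z
    rw [hsum]
    rw [hsum] at hGν
    exact pot_add hGν z
  have h0 : 0 < 1 + ‖z‖ := by positivity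
  have h0' : 1 ≤ 1 + ‖z‖ := by linarith [norm_nonneg z]
  have hkey : (1 + ‖z‖) * Real.exp (pot (τ + σ) z - pot (τ + σ) 0) ≤
      Real.exp C1 * (1 + ‖z‖) ^ (-M) * Real.exp (pot ν z - pot ν 0) := by
    rw [hpn z, hpn 0]
    have e1 : 1 + ‖z‖ = (1 + ‖z‖) ^ (-M) * (1 + ‖z‖) ^ (M + 1) := by
      rw [← Real.rpow_add h0]; simp
    have e2 : (1 + ‖z‖) ^ (M + 1) ≤ Real.exp C1 * Real.exp (pot σ z - pot σ 0) := by
      calc (1 + ‖z‖) ^ (M + 1) ≤ (1 + ‖z‖) ^ a :=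
            Real.rpow_le_rpow_of_exponent_le h0' (le_max_left _ _)
        _ = Real.exp (a * Real.log (1 + ‖z‖)) := by
            rw [Real.rpow_def_of_pos h0, mul_comm]
        _ ≤ _ := by
            rw [← Real.exp_add]
            apply Real.exp_le_exp.mpr
            linarith [hlow z]
    calc (1 + ‖z‖) * Real.exp (pot (τ + σ) z - pot (τ + σ) 0)
        = ((1 + ‖z‖) ^ (-M) * (1 + ‖z‖) ^ (M + 1)) * Real.exp (pot (τ + σ) z - pot (τ + σ) 0) := by
          rw [← e1]
      _ ≤ ((1 + ‖z‖) ^ (-M) * (Real.exp C1 * Real.exp (pot σ z - pot σ 0))) *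
            Real.exp (pot (τ + σ) z - pot (τ + σ) 0) := by gcongr
      _ = Real.exp C1 * (1 + ‖z‖) ^ (-M) * (Real.exp (pot σ z - pot σ 0) *
            Real.exp (pot (τ + σ) z - pot (τ + σ) 0)) := by ring
      _ = _ := by rw [← Real.exp_add]; ring_nf
  have hcd : 0 < cd K' δ γ := by unfold cd; positivity
  calc _ = 2 * Real.exp (cB K' δ γ) / cd K' δ γ * Real.exp C1 * 2 ^ (1 + γ / δ) *
        ((1 + ‖z‖) * Real.exp (pot (τ + σ) z - pot (τ + σ) 0)) := by ring
    _ ≤ 2 * Real.exp (cB K' δ γ) / cd K' δ γ * Real.exp C1 * 2 ^ (1 + γ / δ) *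
        (Real.exp C1 * (1 + ‖z‖) ^ (-M) * Real.exp (pot ν z - pot ν 0)) := by gcongr
    _ = _ := by ring

lemma lap_eq_dd {f : ℂ → ℝ} (hf : ContDiff ℝ (⊤ : ℕ∞) f) (z : ℂ) :
    lap f z = fderiv ℝ (fun y => fderiv ℝ f y 1) z 1
      + fderiv ℝ (fun y => fderiv ℝ f y Complex.I) z Complex.I := by
  have hd : DifferentiableAt ℝ (fderiv ℝ f) z :=
    ((hf.fderiv_right (m := 1) (by norm_cast)).differentiable (by norm_num)).differentiableAt
  unfold lap
  rw [iteratedFDeriv_two_apply, iteratedFDeriv_two_apply,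
    fderiv_clm_apply hd (differentiableAt_const _), fderiv_clm_apply hd (differentiableAt_const _)]
  simp

lemma contDiff_dd {f : ℂ → ℝ} (hf : ContDiff ℝ (⊤ : ℕ∞) f) (v : ℂ) :
    ContDiff ℝ (⊤ : ℕ∞) (fun y => fderiv ℝ f y v) :=
  (hf.fderiv_right (m := (⊤ : ℕ∞)) (by norm_cast)).clm_apply contDiff_const

lemma contDiff_lap {f : ℂ → ℝ} (hf : ContDiff ℝ (⊤ : ℕ∞) f) : ContDiff ℝ (⊤ : ℕ∞) (lap f) := by
  have : lap f = fun z => fderiv ℝ (fun y => fderiv ℝ f y 1) z 1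
      + fderiv ℝ (fun y => fderiv ℝ f y Complex.I) z Complex.I := funext (lap_eq_dd hf)
  rw [this]
  exact (contDiff_dd (contDiff_dd hf _) _).add (contDiff_dd (contDiff_dd hf _) _)

lemma conv_contDiff {m : Measure ℂ} {f g : ℂ → ℝ} (hf : LocallyIntegrable f m)
    (hg : ContDiff ℝ (⊤ : ℕ∞) g) (hc : HasCompactSupport g) :
    ContDiff ℝ (⊤ : ℕ∞) (fun z => ∫ w, f w * g (z - w) ∂m) :=
  hc.contDiff_convolution_right (ContinuousLinearMap.mul ℝ ℝ) hf hg

open scoped Pointwise in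
lemma conv_dd {m : Measure ℂ} [SFinite m] {f g : ℂ → ℝ} (hf : LocallyIntegrable f m)
    (hg : ContDiff ℝ (⊤ : ℕ∞) g) (hc : HasCompactSupport g) (z v : ℂ) :
    fderiv ℝ (fun z => ∫ w, f w * g (z - w) ∂m) z v = ∫ w, f w * fderiv ℝ g (z - w) v ∂m := by
  have hg1 : ContDiff ℝ 1 g := hg.of_le (by norm_cast)
  have hgc := hg1.continuous_fderiv one_ne_zero
  have h3 : ∀ x t, HasFDerivAt (fun x => g (x - t)) (fderiv ℝ g (x - t)) x := fun x t ↦ by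
    simpa using!
      (hg1.differentiable one_ne_zero).differentiableAt.hasFDerivAt.comp x
        ((hasFDerivAt_id x).sub (hasFDerivAt_const t x))
  let K' := -tsupport (fderiv ℝ g) + closedBall z 1
  have hK' : IsCompact K' := (hc.fderiv ℝ).isCompact.neg.add (isCompact_closedBall z 1)
  obtain ⟨B, hB⟩ := (hc.fderiv ℝ).exists_bound_of_continuous hgc
  have h2 : HasFDerivAt (fun z => ∫ w, f w * g (z - w) ∂m)
      (∫ w, f w • fderiv ℝ g (z - w) ∂m) z := by
    apply hasFDerivAt_integral_of_dominated_of_fderiv_le (ball_mem_nhds z zero_lt_one)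
      (bound := K'.indicator (fun t => ‖f t‖ * B))
    · refine Eventually.of_forall fun x => ?_
      exact hf.aestronglyMeasurable.mul
        (hg1.continuous.comp (by fun_prop : Continuous fun w => x - w)).aestronglyMeasurable
    · exact hc.convolutionExists_right (ContinuousLinearMap.mul ℝ ℝ) hf hg1.continuous z
    · exact hf.aestronglyMeasurable.smul
        (hgc.comp (by fun_prop : Continuous fun w => z - w)).aestronglyMeasurable
    · filter_upwards with t x hx
      rw [norm_smul]
      by_cases ht : t ∈ K'
      · rw [indicator_of_mem ht]
        exact mul_le_mul_of_nonneg_left (hB _) (norm_nonneg _)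
      · rw [indicator_of_notMem ht]
        have : fderiv ℝ g (x - t) = 0 := by
          by_contra h0
          apply ht
          refine ⟨-(x - t), ?_, x, ball_subset_closedBall hx, by simp⟩
          simpa using subset_tsupport _ h0
        rw [this, norm_zero, mul_zero]
    · rw [integrable_indicator_iff hK'.measurableSet]
      exact ((hf.integrableOn_isCompact hK').norm.mul_const _)
    · exact Eventually.of_forall fun t x _ => (h3 x t).const_mul (f t)
  rw [h2.fderiv, ContinuousLinearMap.integral_apply]
  · simp
  · exact (hc.fderiv ℝ).convolutionExists_right
      (ContinuousLinearMap.lsmul ℝ ℝ : ℝ →L[ℝ] (ℂ →L[ℝ] ℝ) →L[ℝ] (ℂ →L[ℝ] ℝ)) hf hgc z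

lemma hcs_dd {g : ℂ → ℝ} (hc : HasCompactSupport g) (v : ℂ) :
    HasCompactSupport (fun y => fderiv ℝ g y v) :=
  (hc.fderiv ℝ).comp_left (g := fun T : ℂ →L[ℝ] ℝ => T v) rfl

lemma conv_lap {m : Measure ℂ} [SFinite m] {f g : ℂ → ℝ} (hf : LocallyIntegrable f m)
    (hg : ContDiff ℝ (⊤ : ℕ∞) g) (hc : HasCompactSupport g) (z : ℂ) :
    lap (fun z => ∫ w, f w * g (z - w) ∂m) z = ∫ w, f w * lap g (z - w) ∂m := by
  rw [lap_eq_dd (conv_contDiff hf hg hc)]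
  simp_rw [conv_dd hf hg hc, conv_dd hf (contDiff_dd hg _) (hcs_dd hc _), lap_eq_dd hg]
  rw [← integral_add]
  · simp_rw [mul_add]
  · exact (hcs_dd (hcs_dd hc _) _).convolutionExists_right (ContinuousLinearMap.mul ℝ ℝ) hf
      (contDiff_dd (contDiff_dd hg _) _).continuous z
  · exact (hcs_dd (hcs_dd hc _) _).convolutionExists_right (ContinuousLinearMap.mul ℝ ℝ) hf
      (contDiff_dd (contDiff_dd hg _) _).continuous z

/-- Laplacian of a radial function. -/
lemma lap_radial {g : ℝ → ℝ} (hg : ContDiff ℝ (⊤ : ℕ∞) g) (x : ℂ) :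
    lap (fun x => g (‖x‖ ^ 2)) x
      = 4 * ‖x‖ ^ 2 * deriv (deriv g) (‖x‖ ^ 2) + 4 * deriv g (‖x‖ ^ 2) := by
  have hg1 : ContDiff ℝ (⊤ : ℕ∞) (deriv g) := by
    have := (contDiff_infty_iff_deriv.mp hg).2
    exact this
  have hL : ContDiff ℝ (⊤ : ℕ∞) (fun x : ℂ => g (‖x‖ ^ 2)) := hg.comp (contDiff_norm_sq ℝ)
  have key : ∀ f : ℝ → ℝ, Differentiable ℝ f → ∀ y v : ℂ,
      HasFDerivAt (fun x : ℂ => f (‖x‖ ^ 2)) (deriv f (‖y‖ ^ 2) • (2 • innerSL ℝ y)) y := by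
    intro f hf y v
    exact (hf _).hasDerivAt.comp_hasFDerivAt y (hasStrictFDerivAt_norm_sq y).hasFDerivAt
  have hdg := hg.differentiable (by norm_cast)
  have hdg1 := hg1.differentiable (by norm_cast)
  have h1 : ∀ v y : ℂ, fderiv ℝ (fun x : ℂ => g (‖x‖ ^ 2)) y v
      = deriv g (‖y‖ ^ 2) * (2 * inner ℝ v y) := by
    intro v y
    rw [(key g hdg y v).fderiv]
    simp
    left
    ring
  have h2 : ∀ v y : ℂ, fderiv ℝ (fun y : ℂ => deriv g (‖y‖ ^ 2) * (2 * inner ℝ v y)) y v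
      = deriv (deriv g) (‖y‖ ^ 2) * (2 * inner ℝ v y) ^ 2
        + 2 * deriv g (‖y‖ ^ 2) * inner ℝ v v := by
    intro v y
    have hi : HasFDerivAt (fun y : ℂ => 2 * inner ℝ v y) ((2:ℝ) • innerSL ℝ v) y :=
      ((innerSL ℝ v).hasFDerivAt (x := y)).const_mul 2
    have h3 : fderiv ℝ (fun y : ℂ => deriv g (‖y‖ ^ 2) * (2 * inner ℝ v y)) y = _ :=
      ((key _ hdg1 y v).mul hi).fderiv
    rw [h3]
    simp
    ring
  rw [lap_eq_dd hL]
  simp_rw [h1, h2]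
  have : ‖x‖ ^ 2 = x.re ^ 2 + x.im ^ 2 := by rw [← Complex.normSq_eq_norm_sq, Complex.normSq_apply]; ring
  simp only [Complex.inner]
  simp
  rw [this]
  ring

/-- A smooth truncation of `log s / 2`. -/
def g0 (s : ℝ) : ℝ := Real.smoothTransition (4 * s - 1) * (Real.log s / 2)

lemma g0_contDiff : ContDiff ℝ (⊤ : ℕ∞) g0 := by
  rw [contDiff_iff_contDiffAt]
  intro s
  by_cases hs : s < 1 / 4
  · have : g0 =ᶠ[𝓝 s] fun _ => (0:ℝ) := by
      filter_upwards [Iio_mem_nhds hs] with y hy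
      rw [mem_Iio] at hy
      rw [g0, Real.smoothTransition.zero_of_nonpos (by linarith), zero_mul]
    exact contDiffAt_const.congr_of_eventuallyEq this
  · have hs0 : s ≠ 0 := by intro h; apply hs; rw [h]; norm_num
    apply ContDiffAt.mul
    · exact (Real.smoothTransition.contDiff.comp (by fun_prop)).contDiffAt
    · exact (Real.contDiffAt_log.mpr hs0).div_const 2

lemma g0_eq {s : ℝ} (hs : 1 / 2 ≤ s) : g0 s = Real.log s / 2 := by
  rw [g0, Real.smoothTransition.one_of_one_le (by linarith), one_mul]

lemma g0_deriv {s : ℝ} (hs : 1 / 2 < s) : deriv g0 s = s⁻¹ / 2 := by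
  have : g0 =ᶠ[𝓝 s] fun s => Real.log s / 2 := by
    filter_upwards [Ioi_mem_nhds hs] with y hy using g0_eq (le_of_lt hy)
  rw [this.deriv_eq]
  exact ((Real.hasDerivAt_log (by linarith)).div_const 2).deriv

lemma g0_deriv2 {s : ℝ} (hs : 1 / 2 < s) : deriv (deriv g0) s = -(s ^ 2)⁻¹ / 2 := by
  have : deriv g0 =ᶠ[𝓝 s] fun s => s⁻¹ / 2 := by
    filter_upwards [Ioi_mem_nhds hs] with y hy using g0_deriv hy
  rw [this.deriv_eq]
  exact ((hasDerivAt_inv (by linarith)).div_const 2).deriv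

/-- Laplacian of the truncated logarithm. -/
def th0 (x : ℂ) : ℝ := lap (fun x => g0 (‖x‖ ^ 2)) x

lemma th0_eq (x : ℂ) : th0 x = 4 * ‖x‖ ^ 2 * deriv (deriv g0) (‖x‖ ^ 2) + 4 * deriv g0 (‖x‖ ^ 2) :=
  lap_radial g0_contDiff x

lemma th0_contDiff : ContDiff ℝ (⊤ : ℕ∞) th0 :=
  contDiff_lap (g0_contDiff.comp (contDiff_norm_sq ℝ))

lemma th0_zero {x : ℂ} (hx : 1 ≤ ‖x‖) : th0 x = 0 := by
  have h1 : 1 / 2 < ‖x‖ ^ 2 := by nlinarith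
  rw [th0_eq, g0_deriv h1, g0_deriv2 h1]
  have : ‖x‖ ≠ 0 := by linarith
  field_simp
  ring

lemma th0_hcs : HasCompactSupport th0 := by
  apply HasCompactSupport.intro (isCompact_closedBall (0:ℂ) 1)
  intro x hx
  apply th0_zero
  simp at hx
  exact hx.le

lemma th0_integral : ∫ x, th0 x = 2 * π := by
  have h := integral_fun_norm_addHaar (volume : Measure ℂ)
    (fun r => 4 * r ^ 2 * deriv (deriv g0) (r ^ 2) + 4 * deriv g0 (r ^ 2))
  simp_rw [← th0_eq] at h
  rw [h]
  have hg1 : ContDiff ℝ (⊤ : ℕ∞) (deriv g0) := (contDiff_infty_iff_deriv.mp g0_contDiff).2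
  have hg2 : ContDiff ℝ (⊤ : ℕ∞) (deriv (deriv g0)) := (contDiff_infty_iff_deriv.mp hg1).2
  set F : ℝ → ℝ := fun y => y ^ (Module.finrank ℝ ℂ - 1) •
      (4 * y ^ 2 * deriv (deriv g0) (y ^ 2) + 4 * deriv g0 (y ^ 2)) with hF
  have hF0 : ∀ y, 1 ≤ y → F y = 0 := by
    intro y hy
    have h1 : 1 / 2 < y ^ 2 := by nlinarith
    have : y ≠ 0 := by linarith
    simp only [hF]
    rw [g0_deriv h1, g0_deriv2 h1]
    simp
    right
    field_simp
    ring
  have hFc : Continuous F := by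
    have := hg1.continuous
    have := hg2.continuous
    simp only [hF]
    fun_prop
  have hFs : HasCompactSupport ((Ioi (0:ℝ)).indicator F) := by
    apply HasCompactSupport.intro (isCompact_Icc (a := (0:ℝ)) (b := 1))
    intro x hx
    by_cases h0 : 0 < x
    · rw [indicator_of_mem (by exact h0)]
      apply hF0
      by_contra h1
      exact hx ⟨h0.le, by linarith⟩
    · rw [indicator_of_notMem (by exact h0)]
  have hFi : IntegrableOn F (Ioi 0) := by
    have h1 : IntegrableOn F (Ioc 0 1) := (hFc.integrableOn_Icc (a := 0) (b := 1)).mono_set Ioc_subset_Icc_self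
    have h2 : IntegrableOn F (Ioi 1) := by
      apply (integrableOn_zero).congr_fun (fun y hy => (hF0 y (le_of_lt hy)).symm) measurableSet_Ioi
    have := h1.union h2
    rwa [Ioc_union_Ioi_eq_Ioi zero_le_one] at this
  have hI : ∫ y in Ioi (0:ℝ), F y = 1 - 2 * (0:ℝ) ^ 2 * deriv g0 ((0:ℝ) ^ 2) := by
    apply integral_Ioi_of_hasDerivAt_of_tendsto (f := fun r => 2 * r ^ 2 * deriv g0 (r ^ 2))
    · have := hg1.continuous
      exact Continuous.continuousWithinAt (by fun_prop)
    · intro x _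
      have h1 : HasDerivAt (fun r : ℝ => r ^ 2) (2 * x) x := by simpa using hasDerivAt_pow 2 x
      have h2 : HasDerivAt (deriv g0) (deriv (deriv g0) (x ^ 2)) (x ^ 2) :=
        (hg1.differentiable (by norm_cast) _).hasDerivAt
      have h3 := (h1.const_mul 2).mul (HasDerivAt.comp (h := fun r : ℝ => r ^ 2) x h2 h1)
      refine HasDerivAt.congr_deriv h3 ?_
      simp [hF]
      ring
    · exact hFi
    · apply tendsto_const_nhds.congr'
      filter_upwards [eventually_ge_atTop 1] with y hy
      have h1 : 1 / 2 < y ^ 2 := by nlinarith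
      have : y ≠ 0 := by linarith
      rw [g0_deriv h1]
      field_simp
  rw [hI]
  simp [Measure.real, Complex.volume_ball]

/-- Regularised logarithm at scale `t`. -/
def kt (t : ℝ) (x : ℂ) : ℝ := g0 ((t ^ 2)⁻¹ * ‖x‖ ^ 2) + Real.log t

lemma kt_contDiff (t : ℝ) : ContDiff ℝ (⊤ : ℕ∞) (kt t) :=
  (g0_contDiff.comp (contDiff_const.mul (contDiff_norm_sq ℝ))).add contDiff_const

lemma kt_eq {t : ℝ} (ht : 0 < t) {x : ℂ} (hx : t ≤ ‖x‖) : kt t x = Real.log ‖x‖ := by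
  have hx0 : 0 < ‖x‖ := ht.trans_le hx
  have : 1 ≤ (t ^ 2)⁻¹ * ‖x‖ ^ 2 := by
    rw [inv_mul_eq_div, one_le_div (by positivity)]
    gcongr
  rw [kt, g0_eq (by linarith), Real.log_mul (by positivity) (by positivity), Real.log_inv,
    Real.log_pow, Real.log_pow]
  push_cast
  ring

lemma kt_diff {t : ℝ} (ht : 0 < t) {x : ℂ} (hx0 : x ≠ 0) (hx : ‖x‖ < t) :
    |kt t x - Real.log ‖x‖| ≤ Real.log (t / ‖x‖) := by
  have hx1 : 0 < ‖x‖ := norm_pos_iff.mpr hx0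
  have hl : 0 ≤ Real.log (t / ‖x‖) := Real.log_nonneg (by rw [one_le_div hx1]; exact hx.le)
  rw [kt, g0, Real.log_mul (by positivity) (by positivity), Real.log_inv,
    Real.log_pow, Real.log_pow]
  set c := Real.smoothTransition (4 * ((t ^ 2)⁻¹ * ‖x‖ ^ 2) - 1)
  have h0 : 0 ≤ c := Real.smoothTransition.nonneg _
  have h1 : c ≤ 1 := Real.smoothTransition.le_one _
  rw [Real.log_div ht.ne' hx1.ne'] at hl ⊢
  have : c * ((-(((2:ℕ):ℝ) * Real.log t) + ((2:ℕ):ℝ) * Real.log ‖x‖) / 2) + Real.log t - Real.log ‖x‖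
      = (1 - c) * (Real.log t - Real.log ‖x‖) := by push_cast; ring
  rw [this, abs_of_nonneg (mul_nonneg (by linarith) hl)]
  nlinarith

lemma kt_lap {t : ℝ} (ht : 0 < t) (x : ℂ) : lap (kt t) x = (t ^ 2)⁻¹ * th0 (t⁻¹ • x) := by
  have h1 : kt t = fun x : ℂ => (fun s => g0 ((t ^ 2)⁻¹ * s) + Real.log t) (‖x‖ ^ 2) := rfl
  have hs : ContDiff ℝ (⊤ : ℕ∞) (fun s => g0 ((t ^ 2)⁻¹ * s) + Real.log t) :=
    (g0_contDiff.comp (contDiff_const.mul contDiff_id)).add contDiff_const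
  have hd1 : deriv (fun s => g0 ((t ^ 2)⁻¹ * s) + Real.log t)
      = fun s => (t ^ 2)⁻¹ * deriv g0 ((t ^ 2)⁻¹ * s) := by
    funext s
    rw [deriv_add_const, deriv_comp_mul_left]
    rfl
  have hd2 : deriv (fun s => (t ^ 2)⁻¹ * deriv g0 ((t ^ 2)⁻¹ * s))
      = fun s => (t ^ 2)⁻¹ * ((t ^ 2)⁻¹ * deriv (deriv g0) ((t ^ 2)⁻¹ * s)) := by
    funext s
    rw [deriv_const_mul_field, deriv_comp_mul_left]
    rfl
  rw [h1, lap_radial hs, hd1, hd2, th0_eq, norm_smul, norm_inv, Real.norm_of_nonneg ht.le, mul_pow,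
    inv_pow]
  ring

lemma kt_lap_zero {t : ℝ} (ht : 0 < t) {x : ℂ} (hx : t ≤ ‖x‖) : lap (kt t) x = 0 := by
  rw [kt_lap ht, th0_zero, mul_zero]
  rw [norm_smul, norm_inv, Real.norm_of_nonneg ht.le, inv_mul_eq_div, one_le_div ht]
  exact hx

lemma kt_lap_hcs {t : ℝ} (ht : 0 < t) : HasCompactSupport (lap (kt t)) := by
  apply HasCompactSupport.intro (isCompact_closedBall (0:ℂ) t)
  intro x hx
  apply kt_lap_zero ht
  simp at hx
  exact hx.le

lemma kt_lap_integral {t : ℝ} (ht : 0 < t) : ∫ x, lap (kt t) x = 2 * π := by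
  simp_rw [kt_lap ht]
  rw [integral_const_mul, Measure.integral_comp_smul, th0_integral]
  simp
  field_simp

lemma kt_lap_norm {t : ℝ} (ht : 0 < t) : ∫ x, |lap (kt t) x| = ∫ x, |th0 x| := by
  simp_rw [kt_lap ht, abs_mul]
  rw [integral_const_mul, Measure.integral_comp_smul volume (fun x => |th0 x|)]
  simp
  field_simp

lemma fderiv_reflect {g : ℂ → ℝ} (hg : ContDiff ℝ (⊤ : ℕ∞) g) (z w v : ℂ) :
    fderiv ℝ (fun w => g (z - w)) w v = - fderiv ℝ g (z - w) v := by
  have h1 : HasFDerivAt (fun w : ℂ => z - w) (-(ContinuousLinearMap.id ℝ ℂ)) w :=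
    (hasFDerivAt_id w).const_sub z
  have h2 := ((hg.differentiable (by norm_cast) (z - w)).hasFDerivAt).comp w h1
  have h3 : fderiv ℝ (fun w => g (z - w)) w = _ := h2.fderiv
  rw [h3]
  simp

lemma lap_reflect {g : ℂ → ℝ} (hg : ContDiff ℝ (⊤ : ℕ∞) g) (z w : ℂ) :
    lap (fun w => g (z - w)) w = lap g (z - w) := by
  have hc : ContDiff ℝ (⊤ : ℕ∞) (fun w => g (z - w)) := hg.comp (by fun_prop)
  rw [lap_eq_dd hc, lap_eq_dd hg]
  simp_rw [fderiv_reflect hg, fderiv_fun_neg]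
  rw [neg_apply, neg_apply,
    fderiv_reflect (contDiff_dd hg _), fderiv_reflect (contDiff_dd hg _), neg_neg, neg_neg]

lemma lap_sub {f g : ℂ → ℝ} (hf : ContDiff ℝ (⊤ : ℕ∞) f) (hg : ContDiff ℝ (⊤ : ℕ∞) g) (z : ℂ) :
    lap (fun z => f z - g z) z = lap f z - lap g z := by
  rw [lap_eq_dd (hf.sub hg), lap_eq_dd hf, lap_eq_dd hg]
  have h : ∀ (f g : ℂ → ℝ), ContDiff ℝ (⊤ : ℕ∞) f → ContDiff ℝ (⊤ : ℕ∞) g → ∀ y v,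
      fderiv ℝ (fun z => f z - g z) y v = fderiv ℝ f y v - fderiv ℝ g y v := by
    intro f g hf hg y v
    rw [fderiv_fun_sub (hf.differentiable (by norm_cast) _) (hg.differentiable (by norm_cast) _)]
    rfl
  simp_rw [h f g hf hg]
  rw [h _ _ (contDiff_dd hf _) (contDiff_dd hg _), h _ _ (contDiff_dd hf _) (contDiff_dd hg _)]
  ring

lemma riesz {φ : ℂ → ℝ} {μ : Measure ℂ} {K δ γ R : ℝ} (hφ : Continuous φ)
    (hlap : ∀ v : ℂ → ℝ, ContDiff ℝ (⊤ : ℕ∞) v → HasCompactSupport v →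
      ∫ z, φ z * lap v z = ∫ z, v z ∂μ)
    (hg : Good (μ.restrict (ball 0 R)) K δ γ R) (hR : 2 ≤ R) :
    ∃ h : ℂ → ℂ, DifferentiableOn ℂ h (ball 0 (R - 1)) ∧ ∀ z ∈ ball (0:ℂ) (R - 1),
      |φ z - 1 / (2 * π) * pot (μ.restrict (ball 0 R)) z - (h z).re| ≤ 1 := by
  have hK := hg.hK
  have hδ := hg.hδ
  have hγ := hg.hγ
  have := hg.fin
  set ν := μ.restrict (ball 0 R) with hν
  set I : ℝ := ∫ x, |th0 x| with hI
  have hI0 : 0 ≤ I := integral_nonneg fun _ => abs_nonneg _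
  -- choice of t
  obtain ⟨t, ht, ht1, htK, htφ⟩ : ∃ t : ℝ, 0 < t ∧ t ≤ 1 ∧ K * (1 + R) ^ γ * t ^ δ / δ ≤ 1 ∧
      ∀ z ∈ ball (0:ℂ) (R - 1), ∀ w, ‖z - w‖ < t → |φ z - φ w| ≤ 1 / (I + 1) := by
    have hu := (isCompact_closedBall (0:ℂ) R).uniformContinuousOn_of_continuous hφ.continuousOn
    rw [Metric.uniformContinuousOn_iff] at hu
    obtain ⟨s, hs, hs2⟩ := hu (1 / (I + 1)) (by positivity)
    have hlim : Tendsto (fun t : ℝ => K * (1 + R) ^ γ * t ^ δ / δ) (𝓝[>] 0) (𝓝 0) := by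
      have h1 : Tendsto (fun t : ℝ => t ^ δ) (𝓝[>] 0) (𝓝 0) := by
        have := (Real.continuousAt_rpow_const 0 δ (Or.inr hδ.le)).tendsto
        rw [Real.zero_rpow hδ.ne'] at this
        exact this.mono_left nhdsWithin_le_nhds
      have := (h1.const_mul (K * (1 + R) ^ γ)).div_const δ
      simpa using this
    have h2 := (hlim.eventually (ge_mem_nhds one_pos : ∀ᶠ x in 𝓝 (0:ℝ), x ≤ 1))
    have h3 : Ioo (0:ℝ) (min s 1) ∈ 𝓝[>] (0:ℝ) := Ioo_mem_nhdsGT (by positivity)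
    obtain ⟨t, ht2, ht3⟩ := (h2.and h3).exists
    rw [lt_min_iff] at ht3
    refine ⟨t, ht3.1, ht3.2.2.le, ht2, fun z hz w hw => ?_⟩
    rw [mem_ball, dist_zero_right] at hz
    have := hs2 z (by rw [mem_closedBall, dist_zero_right]; linarith) w (by
      rw [mem_closedBall, dist_zero_right]
      have := norm_sub_norm_le w z
      rw [norm_sub_rev] at this
      linarith) (by rw [dist_eq_norm]; linarith)
    rw [Real.dist_eq] at this
    exact this.le
  set θ := lap (kt t) with hθ
  have hθs : ContDiff ℝ (⊤ : ℕ∞) θ := contDiff_lap (kt_contDiff t)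
  have hθc : HasCompactSupport θ := kt_lap_hcs ht
  have hθi : Integrable θ := hθs.continuous.integrable_of_hasCompactSupport hθc
  set Φ : ℂ → ℝ := fun z => ∫ w, φ w * θ (z - w) with hΦ
  have hφl : LocallyIntegrable φ := hφ.locallyIntegrable
  have hΦs : ContDiff ℝ (⊤ : ℕ∞) Φ := conv_contDiff hφl hθs hθc
  have hΦlap : ∀ z, lap Φ z = ∫ w, θ (z - w) ∂μ := by
    intro z
    rw [hΦ, conv_lap hφl hθs hθc, ← hlap (fun w => θ (z - w)) (hθs.comp (by fun_prop))]
    · simp_rw [lap_reflect hθs]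
    · exact hθc.comp_homeomorph (Homeomorph.subLeft z)
  -- the cut off
  let χ : ContDiffBump (0:ℂ) := ⟨2 * R, 2 * R + 1, by linarith, by linarith⟩
  set κ : ℂ → ℝ := fun x => χ x * kt t x with hκ
  have hκs : ContDiff ℝ (⊤ : ℕ∞) κ := χ.contDiff.mul (kt_contDiff t)
  have hκc : HasCompactSupport κ := χ.hasCompactSupport.mul_right
  have hκ1 : ∀ x ∈ ball (0:ℂ) (2 * R), κ x = kt t x := by
    intro x hx
    simp only [hκ]
    rw [χ.one_of_mem_closedBall (ball_subset_closedBall hx), one_mul]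
  have hκ2 : ∀ x ∈ ball (0:ℂ) (2 * R), lap κ x = θ x := by
    intro x hx
    have : κ =ᶠ[𝓝 x] kt t := by
      filter_upwards [isOpen_ball.mem_nhds hx] with y hy using hκ1 y hy
    simp only [hθ, lap]
    rw [(Filter.EventuallyEq.iteratedFDeriv ℝ this 2).eq_of_nhds]
  set U : ℂ → ℝ := fun z => ∫ w, (fun _ => (1:ℝ)) w * κ (z - w) ∂ν with hU
  have h1l : LocallyIntegrable (fun _ : ℂ => (1:ℝ)) ν := (integrable_const 1).locallyIntegrable
  have hUs : ContDiff ℝ (⊤ : ℕ∞) U := conv_contDiff h1l hκs hκc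
  have hsub : ∀ z ∈ ball (0:ℂ) (R - 1), ∀ᵐ w ∂ν, z - w ∈ ball (0:ℂ) (2 * R) := by
    intro z hz
    filter_upwards [hg.supp] with w hw
    rw [mem_ball, dist_zero_right] at *
    have := norm_sub_le z w
    linarith
  have hUlap : ∀ z ∈ ball (0:ℂ) (R - 1), lap U z = ∫ w, θ (z - w) ∂μ := by
    intro z hz
    rw [hU, conv_lap h1l hκs hκc]
    trans ∫ w, θ (z - w) ∂ν
    · apply integral_congr_ae
      filter_upwards [hsub z hz] with w hw
      rw [one_mul, hκ2 _ hw]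
    · apply setIntegral_eq_integral_of_forall_compl_eq_zero
      intro w hw
      apply kt_lap_zero ht
      rw [mem_ball, dist_zero_right] at *
      have := norm_sub_norm_le w z
      rw [norm_sub_rev] at this
      linarith
  have hharm : InnerProductSpace.HarmonicOnNhd (fun z => 1 / (2 * π) * (Φ z - U z)) (ball (0:ℂ) (R - 1)) := by
    have : InnerProductSpace.HarmonicOnNhd (fun z => Φ z - U z) (ball (0:ℂ) (R - 1)) := by
      intro x hx
      refine ⟨((hΦs.sub hUs).of_le (by norm_cast)).contDiffAt, ?_⟩
      filter_upwards [isOpen_ball.mem_nhds hx] with y hy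
      rw [InnerProductSpace.laplacian_eq_iteratedFDeriv_complexPlane]
      have h := lap_sub hΦs hUs y
      rw [hΦlap, hUlap y hy, sub_self] at h
      exact h
    exact this.const_smul (c := 1 / (2 * π))
  obtain ⟨h, hh1, hh2⟩ := InnerProductSpace.HarmonicOnNhd.exists_analyticOnNhd_ball_re_eq hharm
  refine ⟨h, hh1.differentiableOn, fun z hz => ?_⟩
  have hhz : (h z).re = 1 / (2 * π) * (Φ z - U z) := hh2 hz
  rw [hhz]
  have hpi := Real.pi_gt_three
  -- estimate 1
  have e1 : |2 * π * φ z - Φ z| ≤ 1 := by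
    have hθi2 : Integrable (fun w => θ (z - w)) := hθi.comp_sub_left z
    have h1 : 2 * π * φ z = ∫ w, φ z * θ (z - w) := by
      rw [integral_const_mul, integral_sub_left_eq_self θ volume z, hθ, kt_lap_integral ht]
      ring
    have hi3 : Integrable (fun w => φ w * θ (z - w)) :=
      hθc.convolutionExists_right (ContinuousLinearMap.mul ℝ ℝ) hφl hθs.continuous z
    rw [h1, hΦ, ← integral_sub (hθi2.const_mul _) hi3, ← Real.norm_eq_abs]
    have hb : ∀ w, ‖φ z * θ (z - w) - φ w * θ (z - w)‖ ≤ 1 / (I + 1) * |θ (z - w)| := by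
      intro w
      rw [← sub_mul, norm_mul, Real.norm_eq_abs, Real.norm_eq_abs]
      by_cases hw : ‖z - w‖ < t
      · exact mul_le_mul_of_nonneg_right (htφ z hz w hw) (abs_nonneg _)
      · have : θ (z - w) = 0 := kt_lap_zero ht (not_lt.mp hw)
        rw [this]
        simp
    refine (norm_integral_le_of_norm_le (hθi2.abs.const_mul _) (Eventually.of_forall hb)).trans ?_
    rw [integral_const_mul, integral_sub_left_eq_self (fun w => |θ w|) volume z, hθ,
      kt_lap_norm ht, ← hI, one_div, inv_mul_eq_div, div_le_one (by positivity)]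
    linarith
  have e2 : |U z - pot ν z| ≤ 1 := by
    have hU2 : U z = ∫ w, kt t (z - w) ∂ν := by
      apply integral_congr_ae
      filter_upwards [hsub z hz] with w hw
      rw [one_mul, hκ1 _ hw]
    rw [hU2]
    refine (hg.kernel_approx (kt_contDiff t).continuous ht ht1 (fun x hx => kt_eq ht hx)
      (fun x hx hx2 => kt_diff ht hx hx2) z).trans (le_trans ?_ htK)
    rw [mem_ball, dist_zero_right] at hz
    have := Real.rpow_le_rpow (by positivity) (show 1 + ‖z‖ ≤ 1 + R by linarith) hγ
    gcongr
  have e3 : φ z - 1 / (2 * π) * pot ν z - 1 / (2 * π) * (Φ z - U z)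
      = 1 / (2 * π) * ((2 * π * φ z - Φ z) + (U z - pot ν z)) := by
    field_simp
    ring
  rw [e3, abs_mul, abs_of_pos (by positivity : (0:ℝ) < 1 / (2 * π))]
  have e4 := (abs_add_le (2 * π * φ z - Φ z) (U z - pot ν z)).trans (add_le_add e1 e2)
  rw [one_div, inv_mul_eq_div, div_le_one (by positivity)]
  linarith

lemma holo_limit {B : ℂ → ℝ} (hB : Continuous B) {F : ℕ → ℂ → ℂ}
    (hd : ∀ n : ℕ, DifferentiableOn ℂ (F n) (ball 0 n)) (h0 : ∀ n, F n 0 = 1)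
    (hb : ∀ n : ℕ, ∀ z ∈ ball (0:ℂ) n, ‖F n z‖ ≤ B z) :
    ∃ P : ℂ → ℂ, Differentiable ℂ P ∧ P 0 = 1 ∧ ∀ z, ‖P z‖ ≤ B z := by
  have hlarge : ∀ r : ℝ, ∀ᶠ n : ℕ in (hyperfilter ℕ : Filter ℕ), r < (n:ℝ) := by
    intro r
    apply Filter.Eventually.filter_mono (hyperfilter_le_cofinite)
    rw [Nat.cofinite_eq_atTop]
    exact tendsto_natCast_atTop_atTop.eventually (eventually_gt_atTop r)
  have hlim : ∀ z, ∃ p ∈ closedBall (0:ℂ) (B z),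
      Tendsto (fun n => F n z) (hyperfilter ℕ : Filter ℕ) (𝓝 p) := by
    intro z
    have := (isCompact_closedBall (0:ℂ) (B z)).ultrafilter_le_nhds
      ((hyperfilter ℕ).map (fun n => F n z)) (by
        rw [Ultrafilter.coe_map, le_principal_iff, mem_map]
        filter_upwards [hlarge ‖z‖] with n hn
        rw [mem_preimage, mem_closedBall, dist_zero_right]
        exact hb n z (by rwa [mem_ball, dist_zero_right]))
    exact this
  choose P hP1 hP2 using hlim
  refine ⟨P, ?_, ?_, fun z => by simpa using hP1 z⟩
  swap
  · have := hP2 0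
    simp only [h0] at this
    exact (tendsto_nhds_unique this tendsto_const_nhds)
  intro z0
  set r := ‖z0‖ + 1 with hr
  have hr0 : 0 < r := by positivity
  obtain ⟨S, hS⟩ := (isCompact_closedBall (0:ℂ) (r + 1)).exists_bound_of_continuousOn hB.continuousOn
  have hS0 : 0 ≤ S := (norm_nonneg _).trans (hS 0 (by simp; positivity))
  have hlip : ∀ n : ℕ, r + 1 < n → ∀ x ∈ ball (0:ℂ) r, ∀ y ∈ ball (0:ℂ) r,
      ‖F n y - F n x‖ ≤ S * ‖y - x‖ := by
    intro n hn x hx y hy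
    refine (convex_ball (0:ℂ) r).norm_image_sub_le_of_norm_deriv_le (𝕜 := ℂ) ?_ ?_ hx hy
    · intro w hw
      rw [mem_ball, dist_zero_right] at hw
      exact (hd n).differentiableAt (isOpen_ball.mem_nhds
        (by rw [mem_ball, dist_zero_right]; linarith))
    · intro w hw
      rw [mem_ball, dist_zero_right] at hw
      have hsub : closedBall w 1 ⊆ closedBall 0 (r + 1) := by
        intro u hu
        rw [mem_closedBall, dist_zero_right]
        rw [mem_closedBall, dist_eq_norm] at hu
        have := norm_sub_norm_le u w
        linarith
      have hsub2 : closedBall w 1 ⊆ ball 0 n := hsub.trans (closedBall_subset_ball hn)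
      have := Complex.norm_deriv_le_of_forall_mem_sphere_norm_le (f := F n) (c := w) (C := S) one_pos
        (DifferentiableOn.diffContOnCl (by
          rw [closure_ball w one_ne_zero]; exact (hd n).mono hsub2)) (by
          intro u hu
          have hu := sphere_subset_closedBall hu
          exact (hb n u (hsub2 hu)).trans ((le_abs_self _).trans (hS u (hsub hu))))
      simpa using this
  have hlipP : ∀ x ∈ ball (0:ℂ) r, ∀ y ∈ ball (0:ℂ) r, ‖P y - P x‖ ≤ S * ‖y - x‖ := by
    intro x hx y hy
    refine le_of_tendsto ((hP2 y).sub (hP2 x)).norm ?_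
    filter_upwards [hlarge (r + 1)] with n hn using hlip n hn x hx y hy
  have hloc : TendstoLocallyUniformlyOn F P (hyperfilter ℕ : Filter ℕ) (ball 0 r) := by
    rw [Metric.tendstoLocallyUniformlyOn_iff]
    intro ε hε x hx
    refine ⟨ball x (ε / (4 * (S + 1))) ∩ ball 0 r,
      inter_mem (mem_nhdsWithin_of_mem_nhds (ball_mem_nhds _ (by positivity))) self_mem_nhdsWithin, ?_⟩
    have h1 := Metric.tendsto_nhds.mp (hP2 x) (ε / 2) (by positivity)
    filter_upwards [h1, hlarge (r + 1)] with n hn1 hn2 y hy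
    have a1 := hlip n hn2 x hx y hy.2
    have a2 := hlipP x hx y hy.2
    have hyx : ‖y - x‖ < ε / (4 * (S + 1)) := by
      have := hy.1
      rwa [mem_ball, dist_eq_norm] at this
    have a3 : S * ‖y - x‖ < ε / 4 := by
      calc S * ‖y - x‖ ≤ (S + 1) * ‖y - x‖ := by gcongr; linarith
        _ < (S + 1) * (ε / (4 * (S + 1))) := by gcongr
        _ = ε / 4 := by field_simp
    rw [dist_eq_norm] at hn1 ⊢
    have : P y - F n y = (P y - P x) - (F n x - P x) - (F n y - F n x) := by ring
    rw [this]
    have b1 := norm_sub_le ((P y - P x) - (F n x - P x)) (F n y - F n x)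
    have b2 := norm_sub_le (P y - P x) (F n x - P x)
    linarith
  have hdiff := hloc.differentiableOn (by
    filter_upwards [hlarge r] with n hn using (hd n).mono (ball_subset_ball hn.le)) isOpen_ball
  exact hdiff.differentiableAt (isOpen_ball.mem_nhds (by rw [mem_ball, dist_zero_right, hr]; linarith))

lemma pot_smul (c : ℝ) (hc : 0 ≤ c) (ν : Measure ℂ) (z : ℂ) :
    pot (ENNReal.ofReal c • ν) z = c * pot ν z := by
  rw [pot, integral_smul_measure, ENNReal.toReal_ofReal hc, smul_eq_mul, pot]

lemma peak0 (D : ℝ≥0) (hD : 1 ≤ D) {ε : ℝ} (hε : 0 < ε) (M : ℝ) :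
    ∃ C : ℝ, 0 < C ∧ ∀ (φ : ℂ → ℝ) (μ : Measure ℂ), Continuous φ →
      (∀ v : ℂ → ℝ, ContDiff ℝ (⊤ : ℕ∞) v → HasCompactSupport v →
        ∫ z, φ z * lap v z = ∫ z, v z ∂μ) → IsDoubling μ D → μ (ball 0 1) = 1 →
      ∃ P : ℂ → ℂ, Differentiable ℂ P ∧ P 0 = 1 ∧ ∀ z, ‖P z‖ ≤
        C * (1 + ‖z‖) ^ (-M) * Real.exp (ε * (φ z - φ 0)) := by
  have hc : 0 < ε / (2 * π) := by positivity
  obtain ⟨C, R1, hC, hR1, hpp⟩ := poly_peak D hD hc M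
  obtain ⟨K, δ, γ, hK, hδ, hγ, hctrl⟩ := doubling_ctrl D hD
  refine ⟨C * Real.exp (2 * ε), by positivity, fun φ μ hφ hlap hμ h1 => ?_⟩
  have hrz : ∀ n : ℕ, ∃ h : ℂ → ℂ, DifferentiableOn ℂ h (ball 0 n) ∧ ∀ z ∈ ball (0:ℂ) (n + R1),
      |φ z - 1 / (2 * π) * pot (μ.restrict (ball 0 (n + R1 + 1))) z - (h z).re| ≤ 1 := by
    intro n
    have hn : (0:ℝ) ≤ n := Nat.cast_nonneg n
    have hg := good_of_doubling (c := 1) (R := n + R1 + 1) hμ h1 hK hδ hγ (by linarith) zero_le_one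
      (hctrl μ hμ h1)
    rw [ENNReal.ofReal_one, one_smul] at hg
    obtain ⟨h, hh1, hh2⟩ := riesz hφ hlap hg (by linarith)
    rw [add_sub_cancel_right] at hh1 hh2
    exact ⟨h, hh1.mono (ball_subset_ball (by linarith)), hh2⟩
  choose h hh1 hh2 using hrz
  have hq : ∀ n : ℕ, ∃ P : ℂ → ℂ, Differentiable ℂ P ∧ P 0 = 1 ∧ ∀ z, ‖P z‖ ≤ C * (1 + ‖z‖) ^ (-M) *
        Real.exp (ε / (2 * π) * pot (μ.restrict (ball 0 (n + R1 + 1))) z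
          - ε / (2 * π) * pot (μ.restrict (ball 0 (n + R1 + 1))) 0) := by
    intro n
    have hn : (0:ℝ) ≤ n := Nat.cast_nonneg n
    have := hpp μ hμ h1 (n + R1 + 1) (by linarith)
    simp_rw [pot_smul _ hc.le] at this
    exact this
  choose Q hQ1 hQ2 hQ3 using hq
  apply holo_limit (F := fun n z => Q n z * Complex.exp (ε * (h n z - h n 0)))
  · apply Continuous.mul
    · apply Continuous.mul continuous_const
      apply Continuous.rpow_const (by fun_prop)
      intro z
      left
      positivity
    · fun_prop
  · intro n
    apply (hQ1 n).differentiableOn.mul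
    apply DifferentiableOn.cexp
    exact ((hh1 n).sub_const _).const_mul _
  · intro n
    simp [hQ2]
  · intro n z hz
    have hz0 : z ∈ ball (0:ℂ) (n + R1) := ball_subset_ball (by linarith) hz
    have h00 : (0:ℂ) ∈ ball (0:ℂ) (n + R1) := mem_ball_self (by positivity)
    have e1 := abs_le.mp (hh2 n z hz0)
    have e2 := abs_le.mp (hh2 n 0 h00)
    rw [norm_mul, Complex.norm_exp]
    refine (mul_le_mul_of_nonneg_right (hQ3 n z) (Real.exp_pos _).le).trans ?_
    have hre : ((ε:ℂ) * (h n z - h n 0)).re = ε * ((h n z).re - (h n 0).re) := by simp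
    rw [hre, mul_assoc, ← Real.exp_add]
    have : C * Real.exp (2 * ε) * (1 + ‖z‖) ^ (-M) * Real.exp (ε * (φ z - φ 0))
        = C * (1 + ‖z‖) ^ (-M) * Real.exp (2 * ε + ε * (φ z - φ 0)) := by
      rw [Real.exp_add]; ring
    rw [this]
    refine mul_le_mul_of_nonneg_left (Real.exp_le_exp.mpr ?_) (by positivity)
    set p := pot (μ.restrict (ball 0 (n + R1 + 1))) z
    set p0 := pot (μ.restrict (ball 0 (n + R1 + 1))) 0
    have e3 : ε / (2 * π) * p - ε / (2 * π) * p0 + ε * ((h n z).re - (h n 0).re)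
        = ε * ((1 / (2 * π) * p + (h n z).re) - (1 / (2 * π) * p0 + (h n 0).re)) := by ring
    rw [e3]
    have e4 : (1 / (2 * π) * p + (h n z).re) - (1 / (2 * π) * p0 + (h n 0).re) ≤ 2 + (φ z - φ 0) := by
      linarith [e1.1, e2.2]
    nlinarith

lemma fderiv_scale {g : ℂ → ℝ} (hg : ContDiff ℝ (⊤ : ℕ∞) g) (r : ℝ) (η w v : ℂ) :
    fderiv ℝ (fun w => g (r⁻¹ • (w - η))) w v = r⁻¹ * fderiv ℝ g (r⁻¹ • (w - η)) v := by
  have h1 : HasFDerivAt (fun w : ℂ => r⁻¹ • (w - η)) (r⁻¹ • (ContinuousLinearMap.id ℝ ℂ)) w :=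
    ((hasFDerivAt_id w).sub_const η).const_smul r⁻¹
  have h2 := ((hg.differentiable (by norm_cast) (r⁻¹ • (w - η))).hasFDerivAt).comp w h1
  have h3 : fderiv ℝ (fun w => g (r⁻¹ • (w - η))) w = _ := h2.fderiv
  rw [h3]
  simp

lemma lap_scale {g : ℂ → ℝ} (hg : ContDiff ℝ (⊤ : ℕ∞) g) (r : ℝ) (η w : ℂ) :
    lap (fun w => g (r⁻¹ • (w - η))) w = (r ^ 2)⁻¹ * lap g (r⁻¹ • (w - η)) := by
  have hc : ContDiff ℝ (⊤ : ℕ∞) (fun w => g (r⁻¹ • (w - η))) := hg.comp (by fun_prop)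
  rw [lap_eq_dd hc, lap_eq_dd hg]
  have h : ∀ (g : ℂ → ℝ), ContDiff ℝ (⊤ : ℕ∞) g → ∀ w v, fderiv ℝ (fun w => r⁻¹ *
      g (r⁻¹ • (w - η))) w v = (r ^ 2)⁻¹ * fderiv ℝ g (r⁻¹ • (w - η)) v := by
    intro g hg w v
    have hc : ContDiff ℝ (⊤ : ℕ∞) (fun w => g (r⁻¹ • (w - η))) := hg.comp (by fun_prop)
    rw [fderiv_const_mul (hc.differentiable (by norm_cast) _), smul_apply,
      fderiv_scale hg, smul_eq_mul]
    ring
  simp_rw [fderiv_scale hg]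
  rw [h _ (contDiff_dd hg _), h _ (contDiff_dd hg _)]
  ring

/-- Rescaled measure. -/
def scl (μ : Measure ℂ) (r : ℝ) (η : ℂ) : Measure ℂ := μ.map (fun w => r⁻¹ • (w - η))

lemma scl_ball (μ : Measure ℂ) {r : ℝ} (hr : 0 < r) (η z : ℂ) (s : ℝ) :
    scl μ r η (ball z s) = μ (ball (η + r • z) (r * s)) := by
  rw [scl, Measure.map_apply (by fun_prop) measurableSet_ball]
  congr 1
  ext w
  rw [mem_preimage, mem_ball, mem_ball, dist_eq_norm, dist_eq_norm]
  have : r⁻¹ • (w - η) - z = r⁻¹ • (w - (η + r • z)) := by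
    rw [← sub_sub, smul_sub r⁻¹ (w - η), smul_smul, inv_mul_cancel₀ hr.ne', one_smul]
  rw [this, norm_smul, norm_inv, Real.norm_of_nonneg hr.le, inv_mul_lt_iff₀ hr]

lemma scl_doubling {μ : Measure ℂ} {D : ℝ≥0} (h : IsDoubling μ D) {r : ℝ} (hr : 0 < r) (η : ℂ) :
    IsDoubling (scl μ r η) D := by
  intro z s hs
  rw [scl_ball μ hr, scl_ball μ hr]
  have := h (η + r • z) (r * s) (by positivity)
  rwa [mul_left_comm] at this

lemma scl_lap {φ : ℂ → ℝ} {μ : Measure ℂ}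
    (hlap : ∀ v : ℂ → ℝ, ContDiff ℝ (⊤ : ℕ∞) v → HasCompactSupport v →
      ∫ z, φ z * lap v z = ∫ z, v z ∂μ) {r : ℝ} (hr : 0 < r) (η : ℂ)
    (v : ℂ → ℝ) (hv : ContDiff ℝ (⊤ : ℕ∞) v) (hc : HasCompactSupport v) :
    ∫ z, φ (η + r • z) * lap v z = ∫ z, v z ∂(scl μ r η) := by
  rw [scl, integral_map (by fun_prop) hv.continuous.aestronglyMeasurable]
  let T : ℂ ≃ₜ ℂ := (Homeomorph.subRight η).trans
      (Homeomorph.smulOfNeZero (r⁻¹) (inv_ne_zero hr.ne') : ℂ ≃ₜ ℂ)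
  rw [← hlap (fun w => v (r⁻¹ • (w - η))) (hv.comp (by fun_prop)) (hc.comp_homeomorph T)]
  simp_rw [lap_scale hv]
  have h1 : ∀ w : ℂ, φ w * ((r ^ 2)⁻¹ * lap v (r⁻¹ • (w - η)))
      = (r ^ 2)⁻¹ * (fun z => φ (η + r • z) * lap v z) (r⁻¹ • (w - η)) := by
    intro w
    simp only [smul_smul, mul_inv_cancel₀ hr.ne', one_smul]
    rw [add_sub_cancel]
    ring
  simp_rw [h1]
  rw [integral_const_mul, integral_sub_right_eq_self
    (fun w => (fun z => φ (η + r • z) * lap v z) (r⁻¹ • w)) η, Measure.integral_comp_smul volume (fun z => φ (η + r • z) * lap v z)]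
  rw [Complex.finrank_real_complex, inv_pow, inv_inv, abs_of_pos (by positivity), smul_eq_mul,
    inv_mul_cancel_left₀ (by positivity)]

lemma pathDist_nonneg {ρ : ℂ → ℝ} (hρ : ∀ z, 0 < ρ z) (z ζ : ℂ) : 0 ≤ pathDist ρ z ζ := by
  apply Real.sInf_nonneg
  rintro L ⟨γ, _, _, _, rfl⟩
  apply intervalIntegral.integral_nonneg zero_le_one
  intro t _
  exact div_nonneg (norm_nonneg _) (hρ _).le

lemma pathDist_le {ρ : ℂ → ℝ} (hρ : ∀ z, 0 < ρ z) (z ζ : ℂ) {B : ℝ}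
    (hB : ∀ w, ‖w - ζ‖ ≤ ‖z - ζ‖ → (ρ w)⁻¹ ≤ B) : pathDist ρ z ζ ≤ ‖z - ζ‖ * B := by
  let g : ℝ → ℂ := fun t => z + t • (ζ - z)
  have hd : ∀ t, HasDerivAt g (ζ - z) t := by
    intro t
    have := ((hasDerivAt_id t).smul_const (ζ - z)).const_add z
    rw [one_smul] at this
    exact this
  have hle : pathDist ρ z ζ ≤ ∫ t in (0:ℝ)..1, ‖deriv g t‖ / ρ (g t) := by
    apply csInf_le
    · refine ⟨0, ?_⟩
      rintro L ⟨γ, _, _, _, rfl⟩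
      apply intervalIntegral.integral_nonneg zero_le_one
      intro t _
      exact div_nonneg (norm_nonneg _) (hρ _).le
    · refine ⟨g, by simp [g], by simp [g], ?_, rfl⟩
      exact contDiff_const.add (contDiff_id.smul contDiff_const)
  refine hle.trans ((le_abs_self _).trans ?_)
  have := intervalIntegral.norm_integral_le_of_norm_le_const (a := 0) (b := 1)
    (f := fun t => ‖deriv g t‖ / ρ (g t)) (C := ‖z - ζ‖ * B) (by
      intro t ht
      rw [uIoc_of_le zero_le_one] at ht
      rw [(hd t).deriv, Real.norm_of_nonneg (div_nonneg (norm_nonneg _) (hρ _).le), div_eq_mul_inv,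
        norm_sub_rev ζ z]
      refine mul_le_mul_of_nonneg_left (hB _ ?_) (norm_nonneg _)
      have : g t - ζ = (1 - t) • (z - ζ) := by simp only [g, Complex.real_smul]; push_cast; ring
      rw [this, norm_smul, Real.norm_of_nonneg (by linarith [ht.2])]
      exact mul_le_of_le_one_left (norm_nonneg _) (by linarith [ht.1]))
  simpa using this

lemma rho_lower {μ : Measure ℂ} {ρ : ℂ → ℝ} (hρ : IsRadius μ ρ) {K δ γ : ℝ} (hK : 0 < K)
    (hδ : 0 < δ) (hγ : 0 ≤ γ) (η w : ℂ) (hc : Ctrl (scl μ (ρ η) η) K δ γ) :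
    (ρ w)⁻¹ ≤ (1 + K ^ (1 / δ)) * (1 + ‖w - η‖ / ρ η) ^ (γ / δ) * (ρ η)⁻¹ := by
  have hr := (hρ η).1
  have hw := (hρ w).1
  set r := ρ η
  set x := ‖w - η‖ / r with hx
  have hx0 : 0 ≤ x := by positivity
  have hu : ‖r⁻¹ • (w - η)‖ = x := by
    rw [norm_smul, norm_inv, Real.norm_of_nonneg hr.le, inv_mul_eq_div]
  set s := ρ w / r with hs
  have hs0 : 0 < s := by positivity
  have hKx : 0 < K ^ (1 / δ) := by positivity
  have hx1 : (1:ℝ) ≤ (1 + x) ^ (γ / δ) := Real.one_le_rpow (by linarith) (by positivity)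
  have key : s⁻¹ ≤ (1 + K ^ (1 / δ)) * (1 + x) ^ (γ / δ) := by
    by_cases h1 : s ≤ 1
    · have h2 := hc.ball_le hδ (r⁻¹ • (w - η)) hs0 h1
      have h3 : scl μ r η (ball (r⁻¹ • (w - η)) s) = 1 := by
        rw [scl_ball μ hr, smul_smul, mul_inv_cancel₀ hr.ne', one_smul, add_sub_cancel, hs,
          mul_div_cancel₀ _ hr.ne']
        exact (hρ w).2
      rw [h3, hu] at h2
      have h4 : 1 ≤ K * (1 + x) ^ γ * s ^ δ := by
        rwa [← ENNReal.ofReal_one, ENNReal.ofReal_le_ofReal_iff (by positivity)] at h2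
      have h5 : (s⁻¹) ^ δ ≤ K * (1 + x) ^ γ := by
        rw [Real.inv_rpow hs0.le, inv_le_iff_one_le_mul₀ (by positivity)]
        exact h4
      have h6 := Real.rpow_le_rpow (by positivity) h5 (by positivity : 0 ≤ 1 / δ)
      rw [← Real.rpow_mul (by positivity), mul_one_div_cancel hδ.ne', Real.rpow_one,
        Real.mul_rpow hK.le (by positivity), ← Real.rpow_mul (by positivity), mul_one_div] at h6
      refine h6.trans ?_
      gcongr
      linarith
    · have : s⁻¹ ≤ 1 := inv_le_one_of_one_le₀ (by linarith)
      nlinarith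
  have : (ρ w)⁻¹ = s⁻¹ * r⁻¹ := by rw [hs]; field_simp
  rw [this]
  gcongr

/-- Peak functions: for any `ε > 0`, flat weight `ω` and `m ∈ ℕ` there is `C > 0`
such that for each `η ∈ ℂ` there is an entire `P_η` with `P_η(η) = 1` and
`|P_η(z)| ≤ C e^{ε(φ(z)-φ(η))} (ω(η)/ω(z)) / (1 + d_φ(z,η)^m)`. -/
theorem peak_functions
    (φ : ℂ → ℝ) (μ : Measure ℂ) (hφ : HasDoublingLaplacian φ μ)
    (ρ : ℂ → ℝ) (hρ : IsRadius μ ρ)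
    (ω : ℂ → ℝ) (hω : IsFlatWeight ρ ω)
    (ε : ℝ) (hε : 0 < ε) (m : ℕ) :
    ∃ C : ℝ, 0 < C ∧ ∀ η : ℂ, ∃ P : ℂ → ℂ, Differentiable ℂ P ∧ P η = 1 ∧
      ∀ z : ℂ, ‖P z‖ ≤
        C * Real.exp (ε * (φ z - φ η)) * (ω η / ω z) / (1 + pathDist ρ z η ^ m) := by
  obtain ⟨D0, _, hD0⟩ := hφ.doubling
  set D : ℝ≥0 := max D0 1 with hD
  have hDbl : IsDoubling μ D := fun z r hr => (hD0 z r hr).trans (by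
    gcongr
    exact le_max_left _ _)
  have hD1 : 1 ≤ D := le_max_right _ _
  obtain ⟨K, δ, γ, hK, hδ, hγ, hctrl⟩ := doubling_ctrl D hD1
  obtain ⟨hωpos, _, Cω, hCω, hω2⟩ := hω
  set A : ℝ := 1 + K ^ (1 / δ) with hA
  have hA1 : 1 ≤ A := by
    have : 0 < K ^ (1 / δ) := by positivity
    linarith
  have hA0 : 0 < A := by linarith
  set q : ℝ := γ / δ + 1 with hq
  obtain ⟨C, hC, hpeak⟩ := peak0 D hD1 hε (q * (Cω + m))
  refine ⟨2 * C * Real.exp Cω * A ^ (Cω + m), by positivity, fun η => ?_⟩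
  have hr := (hρ η).1
  set r := ρ η with hrdef
  have hmass : scl μ r η (ball 0 1) = 1 := by
    rw [scl_ball μ hr, smul_zero, add_zero, mul_one]
    exact (hρ η).2
  have hsd := scl_doubling hDbl hr η
  obtain ⟨P, hP1, hP2, hP3⟩ := hpeak (fun z => φ (η + r • z)) (scl μ r η)
    (hφ.continuous.comp (by fun_prop)) (scl_lap hφ.lap_eq hr η) hsd hmass
  refine ⟨fun z => P (((r⁻¹ : ℝ) : ℂ) * (z - η)), hP1.comp (by fun_prop), by simp [hP2], fun z => ?_⟩
  have hz := hP3 (((r⁻¹ : ℝ) : ℂ) * (z - η))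
  set x := ‖z - η‖ / r with hx
  have hx0 : 0 ≤ x := by positivity
  have hnx : ‖((r⁻¹ : ℝ) : ℂ) * (z - η)‖ = x := by
    rw [norm_mul, Complex.norm_real, norm_inv, Real.norm_of_nonneg hr.le, inv_mul_eq_div]
  have hpt : η + r • (((r⁻¹ : ℝ) : ℂ) * (z - η)) = z := by
    rw [← Complex.real_smul, smul_smul, mul_inv_cancel₀ hr.ne', one_smul, add_sub_cancel]
  simp only [hnx, hpt, smul_zero, add_zero] at hz
  refine hz.trans ?_
  have hd0 := pathDist_nonneg (fun z => (hρ z).1) z η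
  set d := pathDist ρ z η with hd
  have hdX : d ≤ A * (1 + x) ^ q := by
    have h1 := pathDist_le (fun z => (hρ z).1) z η (B := A * (1 + x) ^ (γ / δ) * r⁻¹) (by
      intro w hw
      refine (rho_lower hρ hK hδ hγ η w (hctrl _ hsd hmass)).trans ?_
      have : ‖w - η‖ / r ≤ x := by rw [hx]; gcongr
      gcongr)
    refine h1.trans ?_
    have h2 : ‖z - η‖ * (A * (1 + x) ^ (γ / δ) * r⁻¹) = A * ((1 + x) ^ (γ / δ) * x) := by
      rw [hx]; ring
    rw [h2, hq, Real.rpow_add (by positivity), Real.rpow_one]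
    gcongr
    linarith
  set X := A * (1 + x) ^ q with hX
  have hX1 : 1 ≤ X := one_le_mul_of_one_le_of_one_le hA1
    (Real.one_le_rpow (by linarith) (by positivity))
  have hX0 : 0 < X := by linarith
  have hωz := hωpos z
  have hωη := hωpos η
  have hflat : ω z ≤ ω η * (Real.exp Cω * X ^ Cω) := by
    have h1 := (le_abs_self _).trans (hω2 z η)
    rw [← hd] at h1
    have h2 : max (Real.log d) 0 ≤ Real.log X := by
      apply max_le _ (Real.log_nonneg hX1)
      rcases hd0.eq_or_lt with h | h
      · rw [← h, Real.log_zero]; exact Real.log_nonneg hX1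
      · exact Real.log_le_log h hdX
    have h3 : Real.log (ω z) ≤ Real.log (ω η) + (Cω + Real.log X * Cω) := by nlinarith
    rw [← Real.exp_log hωz]
    refine (Real.exp_le_exp.mpr h3).trans (le_of_eq ?_)
    rw [Real.exp_add, Real.exp_add, Real.exp_log hωη, Real.rpow_def_of_pos hX0]
  have hdm : 1 + d ^ m ≤ 2 * X ^ m := by
    have h1 : d ^ m ≤ X ^ m := by gcongr
    have h2 : 1 ≤ X ^ m := one_le_pow₀ hX1
    linarith
  rw [le_div_iff₀ (by positivity), mul_div_assoc', le_div_iff₀ hωz]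
  have hXp : X ^ Cω * X ^ m = A ^ (Cω + m) * (1 + x) ^ (q * (Cω + m)) := by
    rw [← Real.rpow_natCast X m, ← Real.rpow_add hX0, hX, Real.mul_rpow hA0.le (by positivity),
      ← Real.rpow_mul (by positivity)]
  calc C * (1 + x) ^ (-(q * (Cω + m))) * Real.exp (ε * (φ z - φ η)) * (1 + d ^ m) * ω z
      ≤ C * (1 + x) ^ (-(q * (Cω + m))) * Real.exp (ε * (φ z - φ η)) * (2 * X ^ m) *
        (ω η * (Real.exp Cω * X ^ Cω)) := by gcongr
    _ = 2 * C * Real.exp Cω * Real.exp (ε * (φ z - φ η)) * ω η * (1 + x) ^ (-(q * (Cω + m)))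
        * (X ^ Cω * X ^ m) := by ring
    _ = 2 * C * Real.exp Cω * A ^ (Cω + m) * Real.exp (ε * (φ z - φ η)) * ω η *
        ((1 + x) ^ (-(q * (Cω + m))) * (1 + x) ^ (q * (Cω + m))) := by rw [hXp]; ring
    _ = 2 * C * Real.exp Cω * A ^ (Cω + m) * Real.exp (ε * (φ z - φ η)) * ω η := by
        rw [← Real.rpow_add (by positivity), neg_add_cancel, Real.rpow_zero, mul_one]
    _ ≤ _ := le_rfl

end
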